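/- Let 𝒳=(x_j) be a semi-normalized Schauder basis of a quasi-Banach space 𝕏, let 𝕊 be a locally convex subsymmetric sequence space, and let σ=(σ_n) be an ordered partition of ℕ with N_n=|σ_n| and M_r=Σ_{n=1}^r N_n. Assume that the fundamental function Λ[𝕊] has both the lower regularity property and the upper regularity property, and that M_r ≲ N_{r+1} for all r. Then the unit vector system is an almost greedy basis of 𝕐[𝒳,𝕊,σ], and its fundamental function is equivalent to Λ[𝕊]. -/

import Mathlib

noncomputable section

open Classical
open scoped ENNReal NNReal

namespace AGpaper

/-! ### Convergence and completeness with respect to a gauge -/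

/-- Convergence of a sequence with respect to a gauge (quasi-norm) `q`. -/
def QTendsto {X : Type*} [AddCommGroup X] (q : X → ℝ) (u : ℕ → X) (x : X) : Prop :=
  ∀ ε : ℝ, 0 < ε → ∃ n₀ : ℕ, ∀ n, n₀ ≤ n → q (u n - x) < ε

/-- Cauchy condition with respect to a gauge `q`. -/
def QCauchy {X : Type*} [AddCommGroup X] (q : X → ℝ) (u : ℕ → X) : Prop :=
  ∀ ε : ℝ, 0 < ε → ∃ n₀ : ℕ, ∀ m, n₀ ≤ m → ∀ n, n₀ ≤ n → q (u m - u n) < ε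

/-- A quasi-Banach space structure on a real vector space `X`. -/
structure QuasiBanach (X : Type*) [AddCommGroup X] [Module ℝ X] where
  q : X → ℝ
  kappa : ℝ
  one_le_kappa : 1 ≤ kappa
  q_nonneg : ∀ x, 0 ≤ q x
  q_eq_zero_iff : ∀ x, q x = 0 ↔ x = 0
  q_smul : ∀ (a : ℝ) (x : X), q (a • x) = |a| * q x
  q_triangle : ∀ x y, q (x + y) ≤ kappa * (q x + q y)
  complete : ∀ u : ℕ → X, QCauchy q u → ∃ x, QTendsto q u x

/-- `X` is `p`-convex (0<p≤1): after renorming the quasi-norm is a `p`-norm. -/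
def QuasiBanach.PConvex {X : Type*} [AddCommGroup X] [Module ℝ X]
    (B : QuasiBanach X) (p : ℝ) : Prop :=
  ∃ q' : X → ℝ, (∀ x, 0 ≤ q' x) ∧ (∀ (a : ℝ) (x : X), q' (a • x) = |a| * q' x) ∧
    (∀ x y, q' (x + y) ^ p ≤ q' x ^ p + q' y ^ p) ∧
    ∃ c C : ℝ, 0 < c ∧ ∀ x, c * B.q x ≤ q' x ∧ q' x ≤ C * B.q x

/-! ### Biorthogonal systems and Schauder bases -/

variable {X : Type*} [AddCommGroup X] [Module ℝ X]

/-- A biorthogonal system in a space of vectors `X` which is equipped with a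
membership predicate `mem` (the carrier of the space) and a gauge `nrm`:
the coordinate functionals are linear and bounded on the carrier. -/
structure BioSystem (mem : X → Prop) (nrm : X → ℝ) where
  vec : ℕ → X
  vec_mem : ∀ n, mem (vec n)
  coord : ℕ → X → ℝ
  coord_add : ∀ (n : ℕ) (f g : X), mem f → mem g → coord n (f + g) = coord n f + coord n g
  coord_smul : ∀ (n : ℕ) (a : ℝ) (f : X), mem f → coord n (a • f) = a * coord n f
  coord_bdd : ∀ n : ℕ, ∃ C : ℝ, ∀ f, mem f → |coord n f| ≤ C * nrm f
  biorth : ∀ m n, coord m (vec n) = if m = n then (1 : ℝ) else 0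

/-- A Schauder basis: a biorthogonal system whose expansions converge. -/
structure SchauderB (mem : X → Prop) (nrm : X → ℝ) extends BioSystem mem nrm where
  expansion : ∀ f, mem f →
    QTendsto nrm (fun m => ∑ n ∈ Finset.range m, coord n f • vec n) f

/-- A Schauder basis of a quasi-Banach space. -/
abbrev QBasis {X : Type*} [AddCommGroup X] [Module ℝ X] (B : QuasiBanach X) :=
  SchauderB (fun _ : X => True) B.q

variable {mem : X → Prop} {nrm : X → ℝ}

/-- Coordinate projection on a finite set `A`. -/
def BioSystem.proj (b : BioSystem mem nrm) (A : Finset ℕ) (f : X) : X :=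
  ∑ n ∈ A, b.coord n f • b.vec n

def BioSystem.SemiNormalized (b : BioSystem mem nrm) : Prop :=
  ∃ c C : ℝ, 0 < c ∧ ∀ n, c ≤ nrm (b.vec n) ∧ nrm (b.vec n) ≤ C

/-- `A` is a greedy set of `f`. -/
def BioSystem.GreedySet (b : BioSystem mem nrm) (f : X) (A : Finset ℕ) : Prop :=
  ∀ j ∈ A, ∀ k, k ∉ A → |b.coord k f| ≤ |b.coord j f|

def BioSystem.QuasiGreedy (b : BioSystem mem nrm) : Prop :=
  ∃ C : ℝ, ∀ f, mem f → ∀ A : Finset ℕ, b.GreedySet f A → nrm (b.proj A f) ≤ C * nrm f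

def BioSystem.Democratic (b : BioSystem mem nrm) : Prop :=
  ∃ C : ℝ, ∀ A B : Finset ℕ, A.card ≤ B.card →
    nrm (∑ n ∈ A, b.vec n) ≤ C * nrm (∑ n ∈ B, b.vec n)

def BioSystem.AlmostGreedy (b : BioSystem mem nrm) : Prop :=
  b.QuasiGreedy ∧ b.Democratic

/-- Asymptotic suppression unconditionality: coordinate projections `S_A` with
`|A| < min A` are uniformly bounded. -/
def BioSystem.ASU (b : BioSystem mem nrm) : Prop :=
  ∃ D : ℝ, ∀ A : Finset ℕ, (∀ n ∈ A, A.card < n) →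
    ∀ f, mem f → nrm (b.proj A f) ≤ D * nrm f

/-- The fundamental function (upper super-democracy function). -/
def BioSystem.fundFun (b : BioSystem mem nrm) (m : ℕ) : ℝ :=
  sSup {t : ℝ | ∃ (A : Finset ℕ) (ε : ℕ → ℝ), A.card ≤ m ∧ (∀ n ∈ A, |ε n| = 1) ∧
    t = nrm (∑ n ∈ A, ε n • b.vec n)}

/-- The unconditionality parameters `k_m`. -/
def BioSystem.kparam (b : BioSystem mem nrm) (m : ℕ) : ℝ :=
  sSup {t : ℝ | ∃ (A : Finset ℕ) (f : X), A.card ≤ m ∧ mem f ∧ nrm f ≤ 1 ∧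
    t = nrm (b.proj A f)}

/-- The unconditionality parameters `k̃_m` (restricted to the span of the first
`m` basis vectors). -/
def BioSystem.ktilde (b : BioSystem mem nrm) (m : ℕ) : ℝ :=
  sSup {t : ℝ | ∃ (A : Finset ℕ) (a : ℕ → ℝ),
    nrm (∑ n ∈ Finset.range m, a n • b.vec n) ≤ 1 ∧
    t = nrm (b.proj A (∑ n ∈ Finset.range m, a n • b.vec n))}

/-! ### Symmetric and subsymmetric sequence spaces -/

/-- The indicator of `{0, 1, ..., m-1}`. -/
def indic (m : ℕ) : ℕ → ℝ := fun j => if j < m then 1 else 0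

/-- The `n`-th unit vector. -/
def unitVec (n : ℕ) : ℕ → ℝ := fun j => if j = n then 1 else 0

/-- The spreading `Σ_n ε_n f_n e_{φ(n)}` of a sequence `f`. -/
def spread (φ : ℕ → ℕ) (ε : ℕ → ℝ) (f : ℕ → ℝ) : ℕ → ℝ :=
  fun j => if h : ∃ n, φ n = j then ε h.choose * f h.choose else 0

/-- A symmetric sequence space: a quasi-Banach sequence space whose quasi-norm is
invariant under permutations and signs. -/
structure SymmetricSpace where
  mem : (ℕ → ℝ) → Prop
  nrm : (ℕ → ℝ) → ℝ
  kappa : ℝ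
  one_le_kappa : 1 ≤ kappa
  zero_mem : mem 0
  add_mem : ∀ {f g}, mem f → mem g → mem (f + g)
  smul_mem : ∀ (a : ℝ) {f}, mem f → mem (a • f)
  nrm_nonneg : ∀ f, 0 ≤ nrm f
  nrm_eq_zero : ∀ {f}, mem f → (nrm f = 0 ↔ f = 0)
  nrm_smul : ∀ (a : ℝ) (f : ℕ → ℝ), nrm (a • f) = |a| * nrm f
  nrm_triangle : ∀ {f g}, mem f → mem g → nrm (f + g) ≤ kappa * (nrm f + nrm g)
  complete : ∀ u : ℕ → (ℕ → ℝ), (∀ n, mem (u n)) → QCauchy nrm u →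
    ∃ f, mem f ∧ QTendsto nrm u f
  symmetric : ∀ {f}, mem f → ∀ (ε : ℕ → ℝ), (∀ n, |ε n| = 1) → ∀ π : Equiv.Perm ℕ,
    mem (fun j => ε j * f (π j)) ∧ nrm (fun j => ε j * f (π j)) = nrm f

/-- Fundamental function of a symmetric sequence space. -/
def SymmetricSpace.Lam (S : SymmetricSpace) (m : ℕ) : ℝ := S.nrm (indic m)

/-- A (locally convex, i.e. Banach) subsymmetric sequence space. -/
structure SubsymmetricSpace where
  mem : (ℕ → ℝ) → Prop
  nrm : (ℕ → ℝ) → ℝ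
  zero_mem : mem 0
  add_mem : ∀ {f g}, mem f → mem g → mem (f + g)
  smul_mem : ∀ (a : ℝ) {f}, mem f → mem (a • f)
  nrm_nonneg : ∀ f, 0 ≤ nrm f
  nrm_eq_zero : ∀ {f}, mem f → (nrm f = 0 ↔ f = 0)
  nrm_smul : ∀ (a : ℝ) (f : ℕ → ℝ), nrm (a • f) = |a| * nrm f
  nrm_triangle : ∀ {f g}, mem f → mem g → nrm (f + g) ≤ nrm f + nrm g
  complete : ∀ u : ℕ → (ℕ → ℝ), (∀ n, mem (u n)) → QCauchy nrm u →
    ∃ f, mem f ∧ QTendsto nrm u f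
  unit_mem : ∀ n, mem (unitVec n)
  unit_basis : ∀ f, mem f →
    QTendsto nrm (fun m => fun j => if j < m then f j else 0) f
  subsym : ∀ {f}, mem f → ∀ (ε : ℕ → ℝ), (∀ n, |ε n| = 1) → ∀ φ : ℕ → ℕ, StrictMono φ →
    mem (spread φ ε f) ∧ nrm (spread φ ε f) = nrm f

/-- Fundamental function of (the unit vector system of) a subsymmetric sequence space. -/
def SubsymmetricSpace.Lam (S : SubsymmetricSpace) (m : ℕ) : ℝ := S.nrm (indic m)

/-- The dual fundamental function `Λ*_m = m / Λ_m`. -/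
def SubsymmetricSpace.LamStar (S : SubsymmetricSpace) (m : ℕ) : ℝ := (m : ℝ) / S.Lam m

/-- Lower regularity property of a sequence of positive reals (indexed by `m ≥ 1`). -/
def LRP (Γ : ℕ → ℝ) : Prop := ∃ b : ℕ, 0 < b ∧ ∀ m : ℕ, 1 ≤ m → 2 * Γ m ≤ Γ (b * m)

/-- Upper regularity property. -/
def URP (Γ : ℕ → ℝ) : Prop := ∃ b : ℕ, 0 < b ∧ ∀ m : ℕ, 1 ≤ m → 2 * Γ (b * m) ≤ (b : ℝ) * Γ m

/-- Superreflexivity of a subsymmetric sequence space: it admits an equivalent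
uniformly convex norm. -/
def SubsymmetricSpace.Superreflexive (S : SubsymmetricSpace) : Prop :=
  ∃ nrm' : (ℕ → ℝ) → ℝ,
    (∀ f, S.mem f → 0 ≤ nrm' f) ∧
    (∀ (a : ℝ) (f), S.mem f → nrm' (a • f) = |a| * nrm' f) ∧
    (∀ f g, S.mem f → S.mem g → nrm' (f + g) ≤ nrm' f + nrm' g) ∧
    (∃ c C : ℝ, 0 < c ∧ ∀ f, S.mem f → c * S.nrm f ≤ nrm' f ∧ nrm' f ≤ C * S.nrm f) ∧
    (∀ ε : ℝ, 0 < ε → ∃ δ : ℝ, 0 < δ ∧ ∀ f g, S.mem f → S.mem g →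
      nrm' f ≤ 1 → nrm' g ≤ 1 → ε ≤ nrm' (f - g) → nrm' (f + g) ≤ 2 * (1 - δ))

/-! ### Upper and lower estimates -/

/-- A finite family with pairwise disjoint supports. -/
def DisjFam {ι : Type*} (F : ι → (ℕ → ℝ)) (J : Finset ι) : Prop :=
  ∀ i ∈ J, ∀ j ∈ J, i ≠ j → ∀ k, F i k = 0 ∨ F j k = 0

/-- `(Σ_{i∈J} |g i|^q)^{1/q}`, interpreted as `max_{i∈J} |g i|` when `q = ∞`. -/
def estNorm (q : ℝ≥0∞) {ι : Type*} (J : Finset ι) (g : ι → ℝ) : ℝ :=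
  if q = ⊤ then ((J.sup fun i => Real.toNNReal |g i| : NNReal) : ℝ)
  else (∑ i ∈ J, |g i| ^ q.toReal) ^ (1 / q.toReal)

/-- Upper `s`-estimate for a subsymmetric space (`s` finite). -/
def SubsymmetricSpace.UpperEst (S : SubsymmetricSpace) (s : ℝ) : Prop :=
  ∃ C : ℝ, ∀ (J : Finset ℕ) (F : ℕ → (ℕ → ℝ)), (∀ i ∈ J, S.mem (F i)) → DisjFam F J →
    S.nrm (∑ i ∈ J, F i) ≤ C * (∑ i ∈ J, S.nrm (F i) ^ s) ^ (1 / s)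

/-- Lower `q`-estimate for a subsymmetric space (`q` finite). -/
def SubsymmetricSpace.LowerEst (S : SubsymmetricSpace) (q : ℝ) : Prop :=
  ∃ C : ℝ, ∀ (J : Finset ℕ) (F : ℕ → (ℕ → ℝ)), (∀ i ∈ J, S.mem (F i)) → DisjFam F J →
    (∑ i ∈ J, S.nrm (F i) ^ q) ^ (1 / q) ≤ C * S.nrm (∑ i ∈ J, F i)

/-- Lower `q`-estimate, `q ∈ (0, ∞]`. -/
def SubsymmetricSpace.LowerEstE (S : SubsymmetricSpace) (q : ℝ≥0∞) : Prop :=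
  ∃ C : ℝ, ∀ (J : Finset ℕ) (F : ℕ → (ℕ → ℝ)), (∀ i ∈ J, S.mem (F i)) → DisjFam F J →
    estNorm q J (fun i => S.nrm (F i)) ≤ C * S.nrm (∑ i ∈ J, F i)

/-! ### Squeeze-symmetry -/

/-- The system is squeezed between the symmetric spaces `S₁` and `S₂`: the series
transform is bounded from `S₁` (on finitely supported vectors) and the coefficient
transform is bounded into `S₂`. -/
def BioSystem.SqueezedBetween (b : BioSystem mem nrm) (S₁ S₂ : SymmetricSpace) : Prop :=
  (∃ C : ℝ, ∀ a : ℕ →₀ ℝ, S₁.mem ⇑a →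
    nrm (∑ n ∈ a.support, a n • b.vec n) ≤ C * S₁.nrm ⇑a) ∧
  (∃ C : ℝ, ∀ f, mem f → S₂.mem (fun n => b.coord n f) ∧
    S₂.nrm (fun n => b.coord n f) ≤ C * nrm f)

/-- Squeeze-symmetric system: squeezed between two symmetric spaces with
equivalent fundamental functions. -/
def BioSystem.SqueezeSymmetric (b : BioSystem mem nrm) : Prop :=
  ∃ S₁ S₂ : SymmetricSpace, b.SqueezedBetween S₁ S₂ ∧
    ∃ c C : ℝ, 0 < c ∧ ∀ m : ℕ, 1 ≤ m →
      c * S₂.Lam m ≤ S₁.Lam m ∧ S₁.Lam m ≤ C * S₂.Lam m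

/-! ### Ordered partitions and the Dilworth–Kalton–Kutzarova construction -/

/-- An ordered partition of `ℕ` into (finite, nonempty) integer intervals. -/
structure OrderedPartition where
  part : ℕ → Finset ℕ
  nonempty : ∀ n, (part n).Nonempty
  ordered : ∀ n, ∀ i ∈ part n, ∀ j ∈ part (n + 1), i < j
  covers : ∀ k : ℕ, ∃ n, k ∈ part n

def OrderedPartition.N (σ : OrderedPartition) (n : ℕ) : ℕ := (σ.part n).card

def OrderedPartition.M (σ : OrderedPartition) (r : ℕ) : ℕ := ∑ n ∈ Finset.range r, σ.N n

/-- The averaging projection `P_σ`. -/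
def OrderedPartition.Pavg (σ : OrderedPartition) (f : ℕ → ℝ) : ℕ → ℝ := fun j =>
  if h : ∃ n, j ∈ σ.part n then
    (∑ i ∈ σ.part h.choose, f i) / ((σ.part h.choose).card : ℝ)
  else 0

/-- The complementary projection `Q_σ = Id - P_σ`. -/
def OrderedPartition.Qavg (σ : OrderedPartition) (f : ℕ → ℝ) : ℕ → ℝ := f - σ.Pavg f

/-- The functionals `v_n* = (Λ*_{N_n})⁻¹ Σ_{j∈σ_n} e_j*`. -/
def vstar (S : SubsymmetricSpace) (σ : OrderedPartition) (n : ℕ) (f : ℕ → ℝ) : ℝ :=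
  (S.Lam (σ.N n) / (σ.N n : ℝ)) * ∑ j ∈ σ.part n, f j

/-- The map `H(f) = Σ_n v_n*(f) x_n`. -/
def Hmap {X : Type*} [AddCommGroup X] [Module ℝ X] (B : QuasiBanach X) (b : QBasis B)
    (S : SubsymmetricSpace) (σ : OrderedPartition) (f : ℕ → ℝ) : X :=
  ∑ᶠ n, vstar S σ n f • b.vec n

/-- The quasi-norm `‖f‖ = ‖Q_σ f‖_S + ‖H f‖_X` on finitely supported sequences,
whose completion is the space `𝕐[𝒳,𝕊,σ]`. -/
def YNorm {X : Type*} [AddCommGroup X] [Module ℝ X] (B : QuasiBanach X) (b : QBasis B)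
    (S : SubsymmetricSpace) (σ : OrderedPartition) (f : ℕ → ℝ) : ℝ :=
  S.nrm (σ.Qavg f) + B.q (Hmap B b S σ f)

/-! ### Concrete sequence spaces -/

/-- Membership in `ℓ_p`, `0 < p < ∞`. -/
def lpMem (p : ℝ) (f : ℕ → ℝ) : Prop := Summable fun n => |f n| ^ p

/-- The `ℓ_p` quasi-norm, `0 < p < ∞`. -/
def lpNrm (p : ℝ) (f : ℕ → ℝ) : ℝ := (∑' n, |f n| ^ p) ^ (1 / p)

/-- Membership in `ℓ_p` for extended `p` (where `ℓ_∞` means `c₀`). -/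
def lpMemE (p : ℝ≥0∞) (f : ℕ → ℝ) : Prop :=
  if p = ⊤ then Filter.Tendsto f Filter.atTop (nhds 0) else lpMem p.toReal f

/-- The `ℓ_p` quasi-norm for extended `p`. -/
def lpNrmE (p : ℝ≥0∞) (f : ℕ → ℝ) : ℝ :=
  if p = ⊤ then ⨆ n, |f n| else lpNrm p.toReal f

/-- Membership in the matrix space `Z_{p,q} = ℓ_q(ℓ_p)` (with `ℓ_∞` meaning `c₀`). -/
def ZMem (p q : ℝ≥0∞) (f : ℕ → ℕ → ℝ) : Prop :=
  (∀ n, lpMemE p (f n)) ∧ lpMemE q (fun n => lpNrmE p (f n))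

/-- The quasi-norm of `Z_{p,q} = ℓ_q(ℓ_p)`. -/
def ZNrm (p q : ℝ≥0∞) (f : ℕ → ℕ → ℝ) : ℝ := lpNrmE q (fun n => lpNrmE p (f n))


/-! ### Finitely supported sequences in a subsymmetric space -/

def FS (f : ℕ → ℝ) : Prop := (Function.support f).Finite

theorem FS.of_imp {f g : ℕ → ℝ} (hg : FS g) (h : ∀ n, g n = 0 → f n = 0) : FS f := by
  apply Set.Finite.subset hg
  intro n hn hgn
  exact hn (h n hgn)

theorem FS.of_range {f : ℕ → ℝ} (R : ℕ) (h : ∀ n, R ≤ n → f n = 0) : FS f := by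
  apply Set.Finite.subset (Set.finite_lt_nat R)
  intro n hn
  by_contra hc
  exact hn (h n (not_lt.mp hc))

theorem FS.of_finset {f : ℕ → ℝ} (A : Finset ℕ) (h : ∀ n, n ∉ A → f n = 0) : FS f := by
  apply Set.Finite.subset A.finite_toSet
  intro n hn
  by_contra hc
  exact hn (h n hc)

theorem FS.bound {f : ℕ → ℝ} (hf : FS f) : ∃ R, ∀ n, R ≤ n → f n = 0 := by
  obtain ⟨R, hR⟩ := hf.bddAbove
  refine ⟨R + 1, fun n hn => ?_⟩
  by_contra hc
  have := hR (show n ∈ Function.support f from hc)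
  omega

theorem FS.add {f g : ℕ → ℝ} (hf : FS f) (hg : FS g) : FS (f + g) :=
  (hf.union hg).subset (Function.support_add f g)

theorem FS.sub {f g : ℕ → ℝ} (hf : FS f) (hg : FS g) : FS (f - g) :=
  (hf.union hg).subset (Function.support_sub f g)

theorem FS.smul {f : ℕ → ℝ} (a : ℝ) (hf : FS f) : FS (a • f) :=
  hf.of_imp (fun n h => by simp [h])

theorem FS.indicator {f : ℕ → ℝ} (D : Set ℕ) (hf : FS f) : FS (D.indicator f) :=
  hf.of_imp (fun n h => by simp [Set.indicator, h])

theorem FS.sum {ι : Type*} (J : Finset ι) (F : ι → ℕ → ℝ) (h : ∀ i ∈ J, FS (F i)) :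
    FS (∑ i ∈ J, F i) := by
  induction J using Finset.induction_on with
  | empty => exact FS.of_range 0 (by simp)
  | insert a s ha ih =>
    rw [Finset.sum_insert ha]
    exact (h a (by simp)).add (ih (fun i hi => h i (by simp [hi])))

namespace SubsymmetricSpace
variable (S : SubsymmetricSpace)

theorem FSmem {f : ℕ → ℝ} (hf : FS f) : S.mem f := by
  obtain ⟨R, hR⟩ := hf.bound
  have key : ∀ R : ℕ, ∀ f : ℕ → ℝ, (∀ n, R ≤ n → f n = 0) → S.mem f := by
    intro R
    induction R with
    | zero =>
      intro f hf
      have : f = 0 := by ext n; exact hf n (Nat.zero_le n)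
      rw [this]; exact S.zero_mem
    | succ R ih =>
      intro f hf
      have : f = (fun n => if n = R then 0 else f n) + (f R) • unitVec R := by
        ext n
        by_cases h : n = R <;> simp [h, unitVec]
      rw [this]
      refine S.add_mem (ih _ ?_) (S.smul_mem _ (S.unit_mem R))
      intro n hn
      by_cases h : n = R
      · simp [h]
      · simp only [h, if_false]; exact hf n (by omega)
  exact key R f hR

theorem nrm_zero' : S.nrm 0 = 0 := by
  have := S.nrm_smul 0 0
  simpa using this

theorem tri {f g : ℕ → ℝ} (hf : FS f) (hg : FS g) : S.nrm (f + g) ≤ S.nrm f + S.nrm g :=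
  S.nrm_triangle (S.FSmem hf) (S.FSmem hg)

theorem nrm_neg' (f : ℕ → ℝ) : S.nrm (-f) = S.nrm f := by
  have := S.nrm_smul (-1) f
  simpa using this

theorem tri_sub {f g : ℕ → ℝ} (hf : FS f) (hg : FS g) : S.nrm (f - g) ≤ S.nrm f + S.nrm g := by
  have h := S.tri hf (hg.smul (-1))
  have e : f + (-1 : ℝ) • g = f - g := by ext n; simp [sub_eq_add_neg]
  rw [e] at h
  have : S.nrm ((-1 : ℝ) • g) = S.nrm g := by rw [S.nrm_smul]; simp
  linarith

theorem nrm_sum {ι : Type*} (J : Finset ι) (F : ι → ℕ → ℝ) (h : ∀ i ∈ J, FS (F i)) :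
    S.nrm (∑ i ∈ J, F i) ≤ ∑ i ∈ J, S.nrm (F i) := by
  induction J using Finset.induction_on with
  | empty => simp [S.nrm_zero']
  | insert a s ha ih =>
    rw [Finset.sum_insert ha, Finset.sum_insert ha]
    have h1 : ∀ i ∈ s, FS (F i) := fun i hi => h i (by simp [hi])
    have := S.tri (h a (by simp)) (FS.sum s F h1)
    linarith [ih h1]

theorem spread_apply {φ : ℕ → ℕ} (hφ : StrictMono φ) (ε f : ℕ → ℝ) (n : ℕ) :
    spread φ ε f (φ n) = ε n * f n := by
  have h : ∃ m, φ m = φ n := ⟨n, rfl⟩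
  have e : h.choose = n := hφ.injective h.choose_spec
  unfold spread
  rw [dif_pos h, e]

theorem spread_apply_not {φ : ℕ → ℕ} (ε f : ℕ → ℝ) (k : ℕ) (hk : ∀ n, φ n ≠ k) :
    spread φ ε f k = 0 := by
  unfold spread
  rw [dif_neg]
  rintro ⟨n, hn⟩
  exact hk n hn

theorem nrm_sign {f : ℕ → ℝ} (hf : FS f) (ε : ℕ → ℝ) (hε : ∀ n, |ε n| = 1) :
    S.nrm (fun n => ε n * f n) = S.nrm f := by
  have h := (S.subsym (S.FSmem hf) ε hε id strictMono_id).2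
  rw [← h]
  congr 1
  ext n
  exact (spread_apply strictMono_id ε f n).symm

theorem nrm_mult (A : Finset ℕ) : ∀ (θ f : ℕ → ℝ), FS f → (∀ n, |θ n| ≤ 1) →
    (∀ n, n ∉ A → θ n = 1) → S.nrm (fun n => θ n * f n) ≤ S.nrm f := by
  induction A using Finset.induction_on with
  | empty =>
    intro θ f hf _ h
    have : (fun n => θ n * f n) = f := by ext n; simp [h n (by simp)]
    rw [this]
  | insert a s ha ih =>
    intro θ f hf h1 h2
    set θ' : ℕ → ℝ := fun n => if n = a then 1 else θ n with hθ'
    set g : ℕ → ℝ := fun n => θ' n * f n with hg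
    have hgF : FS g := hf.of_imp (fun n h => by simp [hg, h])
    have hgb : S.nrm g ≤ S.nrm f := by
      apply ih θ' f hf
      · intro n; by_cases h : n = a <;> simp [hθ', h, h1]
      · intro n hn
        by_cases h : n = a
        · simp [hθ', h]
        · simp only [hθ', h, if_false]; exact h2 n (by simp [h, hn])
    set ε : ℕ → ℝ := fun n => if n = a then -1 else 1 with hε
    have hs := S.nrm_sign hgF ε (by intro n; by_cases h : n = a <;> simp [hε, h])
    set g' : ℕ → ℝ := fun n => ε n * g n with hg'
    have hg'F : FS g' := hgF.of_imp (fun n h => by simp [hg', h])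
    have e : (fun n => θ n * f n) = ((1 + θ a) / 2) • g + ((1 - θ a) / 2) • g' := by
      ext n
      by_cases h : n = a
      · subst h; simp [hg, hg', hε, hθ']; ring
      · simp [hg, hg', hε, hθ', h]; ring
    rw [e]
    have h3 := S.tri (hgF.smul ((1 + θ a) / 2)) (hg'F.smul ((1 - θ a) / 2))
    rw [S.nrm_smul, S.nrm_smul, hs] at h3
    have h4 := abs_le.mp (h1 a)
    rw [abs_of_nonneg (by linarith), abs_of_nonneg (by linarith)] at h3
    linarith

theorem nrm_mono {f g : ℕ → ℝ} (hg : FS g) (h : ∀ n, |f n| ≤ |g n|) : S.nrm f ≤ S.nrm g := by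
  have e : f = fun n => (if g n = 0 then 1 else f n / g n) * g n := by
    ext n
    by_cases h0 : g n = 0
    · have := h n
      rw [h0, abs_zero] at this
      simp [h0, abs_nonpos_iff.mp this]
    · simp [h0]
  rw [e]
  apply S.nrm_mult hg.toFinset _ _ hg
  · intro n
    by_cases h0 : g n = 0
    · simp [h0]
    · simp only [h0, if_false, abs_div]
      rw [div_le_one (abs_pos.mpr h0)]
      exact h n
  · intro n hn
    have h0 : g n = 0 := by
      by_contra hc
      exact hn ((Set.Finite.mem_toFinset hg).mpr hc)
    simp [h0]

theorem nrm_indicator_le {f : ℕ → ℝ} (hf : FS f) (D : Set ℕ) :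
    S.nrm (D.indicator f) ≤ S.nrm f := by
  apply S.nrm_mono hf
  intro n
  by_cases h : n ∈ D <;> simp [h]

/-- Invariance under strictly increasing rearrangement of a finite set. -/
theorem nrm_push (A : Finset ℕ) (ψ : ℕ → ℕ) (hψ : StrictMonoOn ψ A) (f g : ℕ → ℝ)
    (hf : ∀ n, n ∉ A → f n = 0) (hfg : ∀ n ∈ A, g (ψ n) = f n)
    (hg : ∀ k, k ∉ A.image ψ → g k = 0) : S.nrm f = S.nrm g := by
  set φ1 : ℕ → ℕ := fun n => n + (A.filter (· ≤ n)).sup ψ with h1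
  set φ2 : ℕ → ℕ := fun k => k + (A.filter (fun a => ψ a ≤ k)).sup id with h2
  have m1 : StrictMono φ1 := by
    intro a b hab
    have : (A.filter (· ≤ a)).sup ψ ≤ (A.filter (· ≤ b)).sup ψ := by
      apply Finset.sup_mono
      intro x hx
      simp only [Finset.mem_filter] at hx ⊢
      exact ⟨hx.1, by omega⟩
    simp only [h1]; omega
  have m2 : StrictMono φ2 := by
    intro a b hab
    have : (A.filter (fun x => ψ x ≤ a)).sup id ≤ (A.filter (fun x => ψ x ≤ b)).sup id := by
      apply Finset.sup_mono
      intro x hx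
      simp only [Finset.mem_filter] at hx ⊢
      exact ⟨hx.1, by omega⟩
    simp only [h2]; omega
  have e12 : ∀ a ∈ A, φ1 a = φ2 (ψ a) := by
    intro a ha
    have e1 : (A.filter (· ≤ a)).sup ψ = ψ a := by
      apply le_antisymm
      · apply Finset.sup_le
        intro x hx
        simp only [Finset.mem_filter] at hx
        exact hψ.monotoneOn hx.1 ha hx.2
      · exact Finset.le_sup (f := ψ) (by simp [ha])
    have e2 : (A.filter (fun x => ψ x ≤ ψ a)).sup id = a := by
      apply le_antisymm
      · apply Finset.sup_le
        intro x hx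
        simp only [Finset.mem_filter] at hx
        exact (hψ.le_iff_le hx.1 ha).mp hx.2
      · exact Finset.le_sup (f := id) (by simp [ha])
    simp only [h1, h2, e1, e2]; omega
  have s1 := (S.subsym (S.FSmem (FS.of_finset A hf)) (fun _ => 1) (by simp) φ1 m1).2
  have s2 := (S.subsym (S.FSmem (FS.of_finset _ hg)) (fun _ => 1) (by simp) φ2 m2).2
  rw [← s1, ← s2]
  congr 1
  ext k
  by_cases hk : ∃ a ∈ A, φ1 a = k
  · obtain ⟨a, ha, rfl⟩ := hk
    rw [spread_apply m1]
    rw [e12 a ha, spread_apply m2, hfg a ha]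
  · push Not at hk
    have z1 : spread φ1 (fun _ => 1) f k = 0 := by
      by_cases h : ∃ n, φ1 n = k
      · obtain ⟨n, rfl⟩ := h
        rw [spread_apply m1, hf n (fun hn => hk n hn rfl), mul_zero]
      · push Not at h; exact spread_apply_not _ _ _ h
    have z2 : spread φ2 (fun _ => 1) g k = 0 := by
      by_cases h : ∃ n, φ2 n = k
      · obtain ⟨n, rfl⟩ := h
        rw [spread_apply m2, hg n, mul_zero]
        intro hn
        obtain ⟨a, ha, rfl⟩ := Finset.mem_image.mp hn
        exact hk a ha (e12 a ha)
      · push Not at h; exact spread_apply_not _ _ _ h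
    rw [z1, z2]

theorem nrm_pull (A : Finset ℕ) (ψ : ℕ → ℕ) (hψ : StrictMonoOn ψ A) {f : ℕ → ℝ} (hf : FS f) :
    S.nrm ((A : Set ℕ).indicator (fun n => f (ψ n))) ≤ S.nrm f := by
  rw [S.nrm_push A ψ hψ _ (((A.image ψ : Finset ℕ) : Set ℕ).indicator f)]
  · exact S.nrm_indicator_le hf _
  · intro n hn; simp [hn]
  · intro n hn
    rw [Set.indicator_of_mem (by exact_mod_cast Finset.mem_image_of_mem ψ hn),
      Set.indicator_of_mem (by exact_mod_cast hn)]
  · intro k hk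
    rw [Set.indicator_of_notMem (by exact_mod_cast hk)]

theorem indic_FS (m : ℕ) : FS (indic m) :=
  FS.of_range m (fun n hn => by simp [indic, hn])

theorem Lam_nonneg (m : ℕ) : 0 ≤ S.Lam m := S.nrm_nonneg _

theorem Lam_mono {m n : ℕ} (h : m ≤ n) : S.Lam m ≤ S.Lam n := by
  apply S.nrm_mono (indic_FS n)
  intro k
  unfold indic
  by_cases h1 : k < m
  · simp [h1, lt_of_lt_of_le h1 h]
  · simp [h1]

theorem Lam_pos {m : ℕ} (h : 1 ≤ m) : 0 < S.Lam m := by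
  refine lt_of_le_of_ne (S.Lam_nonneg m) (fun h0 => ?_)
  have := (S.nrm_eq_zero (S.FSmem (indic_FS m))).mp h0.symm
  have h1 := congrFun this 0
  simp [indic] at h1
  omega

theorem Lam_zero : S.Lam 0 = 0 := by
  have : indic 0 = 0 := by ext n; simp [indic]
  unfold Lam
  rw [this, S.nrm_zero']

theorem nrm_ind (A : Finset ℕ) : S.nrm ((A : Set ℕ).indicator 1) = S.Lam A.card := by
  unfold Lam
  symm
  have hcard : ∀ n ∈ Finset.range A.card, n < A.card := fun n hn => Finset.mem_range.mp hn
  set ψ : ℕ → ℕ := fun n => if h : n < A.card then A.orderEmbOfFin rfl ⟨n, h⟩ else 0 with hψ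
  have him : ∀ k, k ∈ A → ∃ n, n < A.card ∧ ψ n = k := by
    intro k hk
    have : k ∈ Set.range (A.orderEmbOfFin rfl) := by
      rw [Finset.range_orderEmbOfFin]; exact hk
    obtain ⟨i, hi⟩ := this
    exact ⟨i, i.2, by simp [hψ, hi]⟩
  apply S.nrm_push (Finset.range A.card) ψ
  · intro a ha b hb hab
    have ha' : a < A.card := by simpa using ha
    have hb' : b < A.card := by simpa using hb
    simp only [hψ, ha', hb', dif_pos]
    exact (A.orderEmbOfFin rfl).strictMono (by simpa using hab)
  · intro n hn
    simp at hn
    simp [indic, hn]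
  · intro n hn
    have hn' := hcard n hn
    have : ψ n ∈ A := by
      simp only [hψ, hn', dif_pos]; exact Finset.orderEmbOfFin_mem A rfl _
    rw [Set.indicator_of_mem (by exact_mod_cast this)]
    simp [indic, hn']
  · intro k hk
    rw [Set.indicator_of_notMem]
    intro hkA
    obtain ⟨n, hn, rfl⟩ := him k (by exact_mod_cast hkA)
    exact hk (Finset.mem_image_of_mem ψ (Finset.mem_range.mpr hn))

theorem nrm_le_Lam (A : Finset ℕ) {f : ℕ → ℝ} {t : ℝ} (ht : 0 ≤ t) (h1 : ∀ n ∈ A, |f n| ≤ t)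
    (h2 : ∀ n, n ∉ A → f n = 0) : S.nrm f ≤ t * S.Lam A.card := by
  rw [← S.nrm_ind, ← abs_of_nonneg ht, ← S.nrm_smul]
  apply S.nrm_mono
  · apply FS.smul
    exact FS.of_finset A (fun n hn => by simp [hn])
  · intro n
    by_cases h : n ∈ A
    · simp [h, abs_of_nonneg ht, h1 n h]
    · simp [h, h2 n h]

theorem Lam_le_nrm (A : Finset ℕ) {f : ℕ → ℝ} (hf : FS f) {t : ℝ} (ht : 0 ≤ t)
    (h1 : ∀ n ∈ A, t ≤ |f n|) : t * S.Lam A.card ≤ S.nrm f := by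
  rw [← S.nrm_ind, ← abs_of_nonneg ht, ← S.nrm_smul]
  apply S.nrm_mono hf
  intro n
  by_cases h : n ∈ A
  · simp [h, abs_of_nonneg ht, h1 n h]
  · simp [h]

theorem Lam_add (m n : ℕ) : S.Lam (m + n) ≤ S.Lam m + S.Lam n := by
  have h := S.tri (f := ((Finset.range m : Finset ℕ) : Set ℕ).indicator 1)
    (g := ((Finset.Ico m (m + n) : Finset ℕ) : Set ℕ).indicator 1)
    (FS.of_finset (Finset.range m) (fun n hn => by rw [Set.indicator_of_notMem (by exact_mod_cast hn)]))
    (FS.of_finset (Finset.Ico m (m + n)) (fun n hn => by rw [Set.indicator_of_notMem (by exact_mod_cast hn)]))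
  rw [S.nrm_ind, S.nrm_ind] at h
  simp only [Finset.card_range, Nat.card_Ico, Nat.add_sub_cancel_left] at h
  refine le_trans (le_of_eq ?_) h
  unfold Lam
  congr 1
  ext k
  by_cases h1 : k < m
  · have : k < m + n := by omega
    simp [indic, Set.indicator, h1, this]
  · by_cases h2 : k < m + n
    · simp [indic, Set.indicator, h2, not_lt.mp h1, h1]
    · simp [indic, Set.indicator, h2, h1]

theorem Lam_mul (k m : ℕ) : S.Lam (k * m) ≤ k * S.Lam m := by
  induction k with
  | zero => simp [S.Lam_zero]
  | succ k ih =>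
    rw [Nat.succ_mul]
    have := S.Lam_add (k * m) m
    push_cast
    linarith

/-- quasi-monotonicity of the dual fundamental function. -/
theorem Lam_ratio {m n : ℕ} (hm : 1 ≤ m) (h : m ≤ n) : S.Lam n * m ≤ 2 * n * S.Lam m := by
  have h1 : n ≤ (n / m + 1) * m := by
    have := Nat.div_add_mod n m
    have h2 := Nat.mod_lt n hm
    nlinarith
  have h2 : (n / m + 1) * m ≤ 2 * n := by
    have := Nat.div_mul_le_self n m
    nlinarith
  have h3 := (S.Lam_mono h1).trans (S.Lam_mul _ _)
  have h4 : (((n / m + 1 : ℕ) : ℝ)) * m ≤ 2 * n := by exact_mod_cast h2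
  calc S.Lam n * m ≤ (((n / m + 1 : ℕ) : ℝ) * S.Lam m) * m := by gcongr
    _ = ((((n / m + 1 : ℕ) : ℝ)) * m) * S.Lam m := by ring
    _ ≤ 2 * n * S.Lam m := by
      have := S.Lam_nonneg m
      gcongr

end SubsymmetricSpace

/-! ### Ordered partitions and the averaging projection -/

namespace OrderedPartition
variable (σ : OrderedPartition)

theorem M_succ (n : ℕ) : σ.M (n + 1) = σ.M n + σ.N n := by
  unfold M; rw [Finset.sum_range_succ]

theorem N_pos (n : ℕ) : 1 ≤ σ.N n := Finset.card_pos.mpr (σ.nonempty n)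

theorem M_mono : Monotone σ.M := monotone_nat_of_le_succ (fun n => by rw [σ.M_succ]; omega)

theorem le_M (n : ℕ) : n ≤ σ.M n := by
  induction n with
  | zero => simp
  | succ n ih => rw [σ.M_succ]; have := σ.N_pos n; omega

theorem part_lt {n m : ℕ} (h : n < m) : ∀ i ∈ σ.part n, ∀ j ∈ σ.part m, i < j := by
  induction m, h using Nat.le_induction with
  | base => exact σ.ordered n
  | succ m _ ih =>
    intro i hi j hj
    obtain ⟨k, hk⟩ := σ.nonempty m
    exact (ih i hi k hk).trans (σ.ordered m k hk j hj)

theorem part_inj {n m k : ℕ} (h1 : k ∈ σ.part n) (h2 : k ∈ σ.part m) : n = m := by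
  rcases lt_trichotomy n m with h | h | h
  · exact absurd (σ.part_lt h k h1 k h2) (lt_irrefl k)
  · exact h
  · exact absurd (σ.part_lt h k h2 k h1) (lt_irrefl k)

theorem mem_union_iff (r k : ℕ) : (∃ n, n < r ∧ k ∈ σ.part n) ↔ k < σ.M r := by
  set U := (Finset.range r).biUnion σ.part with hU
  have hmem : ∀ k, k ∈ U ↔ ∃ n, n < r ∧ k ∈ σ.part n := by
    intro k; simp [hU]
  have hcard : U.card = σ.M r := by
    rw [hU, Finset.card_biUnion]
    · rfl
    · intro a _ b _ hab
      show Disjoint (σ.part a) (σ.part b)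
      rw [Finset.disjoint_left]
      intro x hx hx'
      exact hab (σ.part_inj hx hx')
  have hdown : ∀ k ∈ U, ∀ k', k' ≤ k → k' ∈ U := by
    intro k hk k' hk'
    obtain ⟨n, hn, hkn⟩ := (hmem k).mp hk
    obtain ⟨m, hm⟩ := σ.covers k'
    refine (hmem k').mpr ⟨m, ?_, hm⟩
    by_contra hc
    have := σ.part_lt (show n < m by omega) k hkn k' hm
    omega
  rw [← hmem]
  constructor
  · intro hk
    have : Finset.range (k + 1) ⊆ U := by
      intro x hx
      exact hdown k hk x (by simp at hx; omega)
    have := Finset.card_le_card this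
    rw [Finset.card_range] at this
    omega
  · intro hk
    by_contra hc
    have : U ⊆ Finset.range k := by
      intro x hx
      rw [Finset.mem_range]
      by_contra hxk
      exact hc (hdown x hx k (by omega))
    have := Finset.card_le_card this
    rw [Finset.card_range] at this
    omega

theorem mem_part_iff (n k : ℕ) : k ∈ σ.part n ↔ σ.M n ≤ k ∧ k < σ.M (n + 1) := by
  rw [← σ.mem_union_iff (n + 1)]
  constructor
  · intro h
    refine ⟨?_, n, by omega, h⟩
    by_contra hc
    obtain ⟨m, hm, hk⟩ := (σ.mem_union_iff n k).mpr (by omega)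
    have := σ.part_inj h hk
    omega
  · rintro ⟨h1, m, hm, hk⟩
    have : m = n := by
      by_contra hne
      have := (σ.mem_union_iff n k).mp ⟨m, by omega, hk⟩
      omega
    rwa [this] at hk

/-- the index of the block that contains `k`. -/
def blk (k : ℕ) : ℕ := (σ.covers k).choose

theorem blk_mem (k : ℕ) : k ∈ σ.part (σ.blk k) := (σ.covers k).choose_spec

theorem blk_eq {k n : ℕ} (h : k ∈ σ.part n) : σ.blk k = n := σ.part_inj (σ.blk_mem k) h

theorem Pavg_apply (f : ℕ → ℝ) {n k : ℕ} (h : k ∈ σ.part n) :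
    σ.Pavg f k = (∑ i ∈ σ.part n, f i) / (σ.N n : ℝ) := by
  have hex : ∃ n, k ∈ σ.part n := ⟨n, h⟩
  have e : hex.choose = n := σ.part_inj hex.choose_spec h
  unfold Pavg
  rw [dif_pos hex, e]
  rfl

theorem Pavg_blk (f : ℕ → ℝ) (k : ℕ) :
    σ.Pavg f k = (∑ i ∈ σ.part (σ.blk k), f i) / (σ.N (σ.blk k) : ℝ) :=
  σ.Pavg_apply f (σ.blk_mem k)

theorem Pavg_add (f g : ℕ → ℝ) : σ.Pavg (f + g) = σ.Pavg f + σ.Pavg g := by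
  ext k
  simp only [Pi.add_apply, Pavg_blk, Finset.sum_add_distrib, add_div]

theorem Pavg_smul (a : ℝ) (f : ℕ → ℝ) : σ.Pavg (a • f) = a • σ.Pavg f := by
  ext k
  simp only [Pi.smul_apply, smul_eq_mul, Pavg_blk, ← Finset.mul_sum, mul_div_assoc]

theorem Qavg_add (f g : ℕ → ℝ) : σ.Qavg (f + g) = σ.Qavg f + σ.Qavg g := by
  unfold Qavg; rw [Pavg_add]; abel

theorem Qavg_smul (a : ℝ) (f : ℕ → ℝ) : σ.Qavg (a • f) = a • σ.Qavg f := by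
  unfold Qavg; rw [Pavg_smul, smul_sub]

theorem bound_M {f : ℕ → ℝ} (hf : FS f) : ∃ R, ∀ k, σ.M R ≤ k → f k = 0 := by
  obtain ⟨R, hR⟩ := hf.bound
  exact ⟨R, fun k hk => hR k ((σ.le_M R).trans hk)⟩

theorem Pavg_zero_of {f : ℕ → ℝ} {R : ℕ} (h : ∀ k, σ.M R ≤ k → f k = 0) :
    ∀ k, σ.M R ≤ k → σ.Pavg f k = 0 := by
  intro k hk
  rw [Pavg_blk, Finset.sum_eq_zero, zero_div]
  intro i hi
  apply h
  have h1 := (σ.mem_part_iff _ _).mp hi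
  have h2 := (σ.mem_part_iff _ _).mp (σ.blk_mem k)
  by_contra hc
  have h3 : σ.blk k < R := by
    by_contra h4
    have := σ.M_mono (not_lt.mp h4)
    omega
  have := σ.M_mono (show σ.blk k + 1 ≤ R by omega)
  omega

theorem FS_Pavg {f : ℕ → ℝ} (hf : FS f) : FS (σ.Pavg f) := by
  obtain ⟨R, hR⟩ := σ.bound_M hf
  exact FS.of_range (σ.M R) (σ.Pavg_zero_of hR)

theorem FS_Qavg {f : ℕ → ℝ} (hf : FS f) : FS (σ.Qavg f) := hf.sub (σ.FS_Pavg hf)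

/-- cyclic shift by `i` inside every block -/
def cyc (i k : ℕ) : ℕ :=
  σ.M (σ.blk k) + (k - σ.M (σ.blk k) + i) % σ.N (σ.blk k)

theorem cyc_mem (i k : ℕ) : σ.cyc i k ∈ σ.part (σ.blk k) := by
  rw [mem_part_iff, M_succ]
  have := Nat.mod_lt (k - σ.M (σ.blk k) + i) (σ.N_pos (σ.blk k))
  unfold cyc
  omega

theorem cyc_eq (i k : ℕ) :
    (k - σ.M (σ.blk k) + i % σ.N (σ.blk k) < σ.N (σ.blk k) →
      σ.cyc i k = k + i % σ.N (σ.blk k)) ∧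
    (¬ (k - σ.M (σ.blk k) + i % σ.N (σ.blk k) < σ.N (σ.blk k)) →
      σ.cyc i k + σ.N (σ.blk k) = k + i % σ.N (σ.blk k)) := by
  have h2 := (σ.mem_part_iff _ _).mp (σ.blk_mem k)
  rw [M_succ] at h2
  have hN := σ.N_pos (σ.blk k)
  have hm := Nat.mod_lt i hN
  have e : (k - σ.M (σ.blk k) + i) % σ.N (σ.blk k) =
      (k - σ.M (σ.blk k) + i % σ.N (σ.blk k)) % σ.N (σ.blk k) := by
    rw [Nat.add_mod_mod]
  unfold cyc
  rw [e]
  constructor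
  · intro h
    rw [Nat.mod_eq_of_lt h]; omega
  · intro h
    rw [Nat.mod_eq_sub_mod (by omega), Nat.mod_eq_of_lt (by omega)]; omega

theorem cyc_strict (i a b : ℕ) (hab : a < b)
    (h : (a - σ.M (σ.blk a) + i % σ.N (σ.blk a) < σ.N (σ.blk a)) ↔
      (b - σ.M (σ.blk b) + i % σ.N (σ.blk b) < σ.N (σ.blk b))) : σ.cyc i a < σ.cyc i b := by
  by_cases hblk : σ.blk a = σ.blk b
  · have h1 := σ.cyc_eq i a
    have h2 := σ.cyc_eq i b
    rw [hblk] at h1 h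
    by_cases hc : (b - σ.M (σ.blk b) + i % σ.N (σ.blk b) < σ.N (σ.blk b))
    · have := h1.1 (h.mpr hc)
      have := h2.1 hc
      omega
    · have := h1.2 (fun hh => hc (h.mp hh))
      have := h2.2 hc
      omega
  · have hlt : σ.blk a < σ.blk b := by
      rcases lt_trichotomy (σ.blk a) (σ.blk b) with h' | h' | h'
      · exact h'
      · exact absurd h' hblk
      · have := σ.part_lt h' b (σ.blk_mem b) a (σ.blk_mem a); omega
    exact σ.part_lt hlt _ (σ.cyc_mem i a) _ (σ.cyc_mem i b)

end OrderedPartition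

theorem sum_cyc_one (N : ℕ) (F : ℕ → ℝ) (a : ℕ) :
    ∑ x ∈ Finset.range N, F ((a + x) % N) = ∑ x ∈ Finset.range N, F x := by
  induction a with
  | zero =>
    apply Finset.sum_congr rfl
    intro x hx
    rw [zero_add, Nat.mod_eq_of_lt (Finset.mem_range.mp hx)]
  | succ a ih =>
    rw [← ih]
    have h1 := Finset.sum_range_succ (fun x => F ((a + x) % N)) N
    have h2 := Finset.sum_range_succ' (fun x => F ((a + x) % N)) N
    rw [h1] at h2
    simp only [Nat.add_mod_right, add_zero] at h2
    have e : ∀ x, a + 1 + x = a + (x + 1) := fun x => by omega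
    simp only [e]
    linarith

theorem sum_cyc (N : ℕ) (F : ℕ → ℝ) (a q : ℕ) :
    ∑ x ∈ Finset.range (N * q), F ((a + x) % N) = q * ∑ x ∈ Finset.range N, F x := by
  induction q with
  | zero => simp
  | succ q ih =>
    rw [Nat.mul_succ, Finset.sum_range_add, ih]
    have e : ∀ x, a + (N * q + x) = a + x + N * q := fun x => by ring
    simp only [e, Nat.add_mul_mod_self_left, sum_cyc_one]
    push_cast; ring

theorem OrderedPartition.sum_part (σ : OrderedPartition) (f : ℕ → ℝ) (n : ℕ) :
    ∑ i ∈ σ.part n, f i = ∑ x ∈ Finset.range (σ.N n), f (σ.M n + x) := by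
  have : σ.part n = Finset.Ico (σ.M n) (σ.M (n + 1)) := by
    ext k; rw [σ.mem_part_iff, Finset.mem_Ico]
  rw [this, Finset.sum_Ico_eq_sum_range, σ.M_succ, Nat.add_sub_cancel_left]

/-- The averaging projection is bounded on finitely supported sequences. -/
theorem Pavg_bound (S : SubsymmetricSpace) (σ : OrderedPartition) {f : ℕ → ℝ} (hf : FS f) :
    S.nrm (σ.Pavg f) ≤ 2 * S.nrm f := by
  obtain ⟨R, hR⟩ := σ.bound_M hf
  set L := ∏ n ∈ Finset.range R, σ.N n with hL
  have hLpos : 0 < L := Finset.prod_pos (fun n _ => σ.N_pos n)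
  have hLR : (0 : ℝ) < L := by exact_mod_cast hLpos
  set G : ℕ → ℕ → ℝ := fun i => ((Finset.range (σ.M R) : Finset ℕ) : Set ℕ).indicator
    (fun k => f (σ.cyc i k)) with hG
  have hGF : ∀ i, FS (G i) := fun i => FS.of_range (σ.M R) (fun n hn => by
    simp [hG, hn])
  have e : (L : ℝ) • σ.Pavg f = ∑ i ∈ Finset.range L, G i := by
    ext k
    rw [Finset.sum_apply]
    by_cases hk : k < σ.M R
    · obtain ⟨n, hn, hkn⟩ := (σ.mem_union_iff R k).mpr hk
      have hb := σ.blk_eq hkn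
      obtain ⟨q, hq⟩ : σ.N n ∣ L := Finset.dvd_prod_of_mem _ (Finset.mem_range.mpr hn)
      simp only [hG, Finset.coe_range, Set.indicator, Set.mem_Iio, hk, if_true]
      unfold OrderedPartition.cyc
      simp only [hb]
      rw [hq, sum_cyc (σ.N n) (fun x => f (σ.M n + x)), ← σ.sum_part, Pi.smul_apply,
        σ.Pavg_apply f hkn, smul_eq_mul]
      have : (σ.N n : ℝ) ≠ 0 := by have := σ.N_pos n; positivity
      push_cast
      field_simp
    · rw [Pi.smul_apply, σ.Pavg_zero_of hR k (by omega)]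
      simp [hG, hk]
  have hGb : ∀ i, S.nrm (G i) ≤ 2 * S.nrm f := by
    intro i
    set p : ℕ → Prop := fun a => a - σ.M (σ.blk a) + i % σ.N (σ.blk a) < σ.N (σ.blk a) with hp
    set A1 := (Finset.range (σ.M R)).filter p with hA1
    set A2 := (Finset.range (σ.M R)).filter (fun a => ¬ p a) with hA2
    have h1 := S.nrm_pull A1 (σ.cyc i) (by
      intro a ha b hb hab
      simp only [hA1, Finset.coe_filter, Set.mem_ofPred_eq] at ha hb
      exact σ.cyc_strict i a b hab (iff_of_true ha.2 hb.2)) hf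
    have h2 := S.nrm_pull A2 (σ.cyc i) (by
      intro a ha b hb hab
      simp only [hA2, Finset.coe_filter, Set.mem_ofPred_eq] at ha hb
      exact σ.cyc_strict i a b hab (iff_of_false ha.2 hb.2)) hf
    have e2 : G i = (A1 : Set ℕ).indicator (fun n => f (σ.cyc i n)) +
        (A2 : Set ℕ).indicator (fun n => f (σ.cyc i n)) := by
      ext k
      by_cases hk : k < σ.M R <;> by_cases hpk : p k <;>
        simp [hG, hA1, hA2, Set.indicator, hk, hpk]
    rw [e2]
    have h3 := S.tri (f := (A1 : Set ℕ).indicator (fun n => f (σ.cyc i n)))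
        (g := (A2 : Set ℕ).indicator (fun n => f (σ.cyc i n)))
        (FS.of_finset A1 (fun n hn => by rw [Set.indicator_of_notMem (by exact_mod_cast hn)]))
        (FS.of_finset A2 (fun n hn => by rw [Set.indicator_of_notMem (by exact_mod_cast hn)]))
    linarith
  have h4 := S.nrm_sum (Finset.range L) G (fun i _ => hGF i)
  rw [← e, S.nrm_smul, abs_of_pos hLR] at h4
  have h5 : ∑ i ∈ Finset.range L, S.nrm (G i) ≤ ∑ i ∈ Finset.range L, 2 * S.nrm f :=
    Finset.sum_le_sum (fun i _ => hGb i)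
  rw [Finset.sum_const, Finset.card_range, nsmul_eq_mul] at h5
  exact le_of_mul_le_mul_left (h4.trans h5) hLR

theorem Qavg_bound (S : SubsymmetricSpace) (σ : OrderedPartition) {f : ℕ → ℝ} (hf : FS f) :
    S.nrm (σ.Qavg f) ≤ 3 * S.nrm f := by
  have h1 := S.tri_sub hf (σ.FS_Pavg hf)
  have h2 := Pavg_bound S σ hf
  unfold OrderedPartition.Qavg
  linarith

theorem part_sum_bound (S : SubsymmetricSpace) (σ : OrderedPartition) {f : ℕ → ℝ} (hf : FS f)
    (n : ℕ) : |∑ i ∈ σ.part n, f i| * S.Lam (σ.N n) ≤ 2 * (σ.N n) * S.nrm f := by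
  have hN : (0 : ℝ) < σ.N n := by exact_mod_cast σ.N_pos n
  have h1 := S.Lam_le_nrm (σ.part n) (σ.FS_Pavg hf) (t := |∑ i ∈ σ.part n, f i| / σ.N n)
    (by positivity) (by
      intro k hk
      rw [σ.Pavg_apply f hk, abs_div, abs_of_pos hN])
  have h2 := h1.trans (Pavg_bound S σ hf)
  change _ * S.Lam (σ.N n) ≤ _ at h2
  rw [div_mul_eq_mul_div, div_le_iff₀ hN] at h2
  linarith

/-- An auxiliary partition whose first block is `{0, ..., d-1}`. -/
def auxPart (d : ℕ) (hd : 1 ≤ d) : OrderedPartition where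
  part n := if n = 0 then Finset.range d else {d + (n - 1)}
  nonempty n := by
    by_cases h : n = 0
    · simp [h]; omega
    · simp [h]
  ordered n i hi j hj := by
    by_cases h : n = 0
    · simp [h] at hi hj; omega
    · simp [h] at hi hj; omega
  covers k := by
    by_cases h : k < d
    · exact ⟨0, by simp [h]⟩
    · exact ⟨k - d + 1, by simp; omega⟩

theorem finset_sum_bound (S : SubsymmetricSpace) {f : ℕ → ℝ} (hf : FS f) (D : Finset ℕ) :
    |∑ i ∈ D, f i| * S.Lam D.card ≤ 2 * D.card * S.nrm f := by
  by_cases hd : D.card = 0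
  · rw [hd, S.Lam_zero]; simp
  have hd1 : 1 ≤ D.card := by omega
  set ψ : ℕ → ℕ := fun n => if h : n < D.card then D.orderEmbOfFin rfl ⟨n, h⟩ else 0 with hψ
  have hmono : StrictMonoOn ψ (Finset.range D.card) := by
    intro a ha b hb hab
    have ha' : a < D.card := by simpa using ha
    have hb' : b < D.card := by simpa using hb
    simp only [hψ, ha', hb', dif_pos]
    exact (D.orderEmbOfFin rfl).strictMono (by simpa using hab)
  have h1 := S.nrm_pull (Finset.range D.card) ψ hmono hf
  set h : ℕ → ℝ := ((Finset.range D.card : Finset ℕ) : Set ℕ).indicator (fun n => f (ψ n)) with hh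
  have hF : FS h := FS.of_finset (Finset.range D.card)
    (fun n hn => by rw [hh, Set.indicator_of_notMem (by exact_mod_cast hn)])
  have h2 := part_sum_bound S (auxPart D.card hd1) hF 0
  have e0 : (auxPart D.card hd1).part 0 = Finset.range D.card := by simp [auxPart]
  have eN : (auxPart D.card hd1).N 0 = D.card := by
    unfold OrderedPartition.N; rw [e0, Finset.card_range]
  rw [eN, e0] at h2
  have es : ∑ i ∈ Finset.range D.card, h i = ∑ i ∈ D, f i := by
    have him : D = (Finset.range D.card).image ψ := by
      symm
      apply Finset.eq_of_subset_of_card_le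
      · intro k hk
        obtain ⟨n, hn, rfl⟩ := Finset.mem_image.mp hk
        have hn' : n < D.card := by simpa using hn
        simp only [hψ, hn', dif_pos]
        exact Finset.orderEmbOfFin_mem D rfl _
      · rw [Finset.card_image_of_injOn hmono.injOn, Finset.card_range]
    conv_rhs => rw [him, Finset.sum_image hmono.injOn]
    apply Finset.sum_congr rfl
    intro x hx
    rw [hh, Set.indicator_of_mem (by exact_mod_cast hx)]
  rw [es] at h2
  refine h2.trans ?_
  gcongr

/-! ### Quasi-Banach spaces: uniform boundedness and geometric sums -/

namespace QuasiBanach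
variable {E : Type*} [AddCommGroup E] [Module ℝ E] (B : QuasiBanach E)

theorem kpos : 0 < B.kappa := lt_of_lt_of_le one_pos B.one_le_kappa

theorem q_zero : B.q 0 = 0 := (B.q_eq_zero_iff 0).mpr rfl

theorem q_neg (x : E) : B.q (-x) = B.q x := by
  have := B.q_smul (-1) x
  simpa using this

theorem q_sub_comm (x y : E) : B.q (x - y) = B.q (y - x) := by
  rw [← B.q_neg, neg_sub]

theorem q_sub (x y : E) : B.q (x - y) ≤ B.kappa * (B.q x + B.q y) := by
  have := B.q_triangle x (-y)
  rwa [B.q_neg, ← sub_eq_add_neg] at this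

theorem q_tri3 (x y z : E) : B.q (x - z) ≤ B.kappa * (B.q (x - y) + B.q (y - z)) := by
  have := B.q_triangle (x - y) (y - z)
  rwa [sub_add_sub_cancel] at this

/-- crude bound for finite sums -/
theorem q_sum_le (k : ℕ) (z : ℕ → E) (T : ℝ) (hT : 0 ≤ T) (h : ∀ n < k, B.q (z n) ≤ T) :
    B.q (∑ n ∈ Finset.range k, z n) ≤ k * B.kappa ^ k * T := by
  induction k with
  | zero => simp [B.q_zero]
  | succ k ih =>
    rw [Finset.sum_range_succ]
    have h1 := ih (fun n hn => h n (by omega))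
    have h2 := h k (by omega)
    have h3 := B.q_triangle (∑ n ∈ Finset.range k, z n) (z k)
    have hk := B.one_le_kappa
    have hp : 1 ≤ B.kappa ^ k := one_le_pow₀ hk
    have hkp := B.kpos
    have h4 : T ≤ B.kappa ^ k * T := le_mul_of_one_le_left hT hp
    calc _ ≤ B.kappa * (k * B.kappa ^ k * T + B.kappa ^ k * T) := by
          refine h3.trans ?_
          gcongr
          linarith
      _ = _ := by push_cast; ring

/-- sums of geometrically decaying terms -/
theorem q_geom (s : ℕ) (hs : 1 ≤ s) : ∃ C : ℝ, 0 ≤ C ∧ ∀ (R : ℕ) (z : ℕ → E) (T : ℝ), 0 ≤ T →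
    (∀ n < R, B.q (z n) ≤ T * (1 / 2) ^ (n / s)) → B.q (∑ n ∈ Finset.range R, z n) ≤ C * T := by
  obtain ⟨l, hl⟩ := exists_pow_lt_of_lt_one (show (0:ℝ) < 1 / (2 * B.kappa) by
    have := B.kpos; positivity) (show (1/2 : ℝ) < 1 by norm_num)
  have hkp := B.kpos
  have hl' : B.kappa * (1/2 : ℝ) ^ l ≤ 1 / 2 := by
    rw [lt_div_iff₀ (by positivity)] at hl
    linarith
  set k := s * l with hk
  set K : ℝ := 2 * B.kappa * (k * B.kappa ^ k) with hK
  have hK0 : 0 ≤ K := by positivity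
  have key : ∀ (N : ℕ) (z : ℕ → E) (T : ℝ), 0 ≤ T →
      (∀ n < k * N, B.q (z n) ≤ T * (1 / 2) ^ (n / s)) →
      B.q (∑ n ∈ Finset.range (k * N), z n) ≤ K * T := by
    intro N
    induction N with
    | zero => intro z T hT _; simp [B.q_zero]; positivity
    | succ N ih =>
      intro z T hT h
      rw [Nat.mul_succ, add_comm, Finset.sum_range_add]
      have h1 := B.q_sum_le k z T hT (fun n hn => by
        refine (h n (by rw [Nat.mul_succ]; omega)).trans ?_
        apply mul_le_of_le_one_right hT
        exact pow_le_one₀ (by norm_num) (by norm_num))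
      have h2 := ih (fun x => z (k + x)) (T * (1/2) ^ l) (by positivity) (fun n hn => by
        refine (h (k + n) (by rw [Nat.mul_succ]; omega)).trans (le_of_eq ?_)
        rw [hk, Nat.mul_add_div (by omega), pow_add]; ring)
      have h3 := B.q_triangle (∑ n ∈ Finset.range k, z n) (∑ x ∈ Finset.range (k * N), z (k + x))
      have h4 : B.kappa * (K * (T * (1/2) ^ l)) ≤ K * T * (1/2) := by
        calc _ = K * T * (B.kappa * (1/2) ^ l) := by ring
          _ ≤ _ := by gcongr
      have h5 : B.kappa * (k * B.kappa ^ k * T) = K * T / 2 := by rw [hK]; ring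
      have h6 : B.kappa * (B.q (∑ n ∈ Finset.range k, z n) +
          B.q (∑ x ∈ Finset.range (k * N), z (k + x))) ≤
          B.kappa * (k * B.kappa ^ k * T + K * (T * (1/2) ^ l)) := by gcongr
      linarith
  have hl0 : 1 ≤ l := by
    by_contra hc
    have : l = 0 := by omega
    rw [this] at hl'
    have := B.one_le_kappa
    norm_num at hl'
    linarith
  have hk1 : 1 ≤ k := Nat.mul_pos hs hl0
  refine ⟨K, hK0, fun R z T hT h => ?_⟩
  have h1 := key R (fun n => if n < R then z n else 0) T hT (fun n _ => by
    by_cases hn : n < R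
    · simp only [hn, if_true]; exact h n hn
    · simp only [hn, if_false, B.q_zero]; positivity)
  have e : ∑ n ∈ Finset.range R, z n =
      ∑ n ∈ Finset.range (k * R), (if n < R then z n else 0) := by
    rw [← Finset.sum_filter]
    apply Finset.sum_congr _ (fun _ _ => rfl)
    ext n
    simp only [Finset.mem_filter, Finset.mem_range]
    have : R ≤ k * R := Nat.le_mul_of_pos_left R hk1
    omega
  rw [e]; exact h1

/-- Uniform boundedness principle (gliding hump). -/
theorem uniform_bdd (T : ℕ → E → E)
    (hadd : ∀ n x y, T n (x + y) = T n x + T n y)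
    (hsmul : ∀ n (a : ℝ) x, T n (a • x) = a • T n x)
    (hb : ∀ n, ∃ C : ℝ, 0 ≤ C ∧ ∀ x, B.q (T n x) ≤ C * B.q x)
    (hp : ∀ x, ∃ C : ℝ, ∀ n, B.q (T n x) ≤ C) :
    ∃ C : ℝ, 0 ≤ C ∧ ∀ n x, B.q (T n x) ≤ C * B.q x := by
  by_contra hcon
  push Not at hcon
  have hkp := B.kpos
  have hk1 := B.one_le_kappa
  have hneg : ∀ n x, T n (-x) = - T n x := by
    intro n x
    have := hsmul n (-1) x
    simpa using this
  have hsub : ∀ n x y, T n (x - y) = T n x - T n y := by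
    intro n x y
    rw [sub_eq_add_neg, hadd, hneg, ← sub_eq_add_neg]
  have hT0 : ∀ n, T n 0 = 0 := by
    intro n
    have := hsmul n 0 0
    simpa using this
  have step : ∀ (k : ℕ) (p : E × {δ : ℝ // 0 < δ}), ∃ p' : E × {δ : ℝ // 0 < δ},
      B.q (p'.1 - p.1) ≤ p.2.1 ∧ p'.2.1 ≤ p.2.1 / (2 * B.kappa) ∧
      ∃ n, ∀ y, B.q (y - p'.1) ≤ 3 * B.kappa ^ 2 * p'.2.1 → (k : ℝ) ≤ B.q (T n y) := by
    rintro k ⟨x, δ, hδ⟩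
    obtain ⟨n, h, hnh⟩ := hcon (B.kappa * (B.kappa * (k + 1)) / δ) (by positivity)
    have hh : 0 < B.q h := by
      refine lt_of_le_of_ne (B.q_nonneg h) (fun h0 => ?_)
      have := (B.q_eq_zero_iff h).mp h0.symm
      rw [this, hT0, B.q_zero] at hnh
      simp at hnh
    set g := (δ / B.q h) • h with hg
    have hgq : B.q g = δ := by
      rw [hg, B.q_smul, abs_of_pos (by positivity)]; field_simp
    have hTg : B.kappa * (B.kappa * (k + 1)) ≤ B.q (T n g) := by
      rw [hg, hsmul, B.q_smul, abs_of_pos (by positivity)]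
      have : δ / B.q h * (B.kappa * (B.kappa * (k + 1)) / δ * B.q h) ≤
          δ / B.q h * B.q (T n h) := by gcongr
      refine le_trans (le_of_eq ?_) this
      field_simp
    have hex : ∃ x', B.q (x' - x) ≤ δ ∧ B.kappa * (k + 1) ≤ B.q (T n x') := by
      by_contra hno
      push Not at hno
      have h1 := hno (x + g) (by rw [add_sub_cancel_left, hgq])
      have h2 := hno (x - g) (by rw [sub_sub_cancel_left, B.q_neg, hgq])
      have h3 := B.q_sub (T n (x + g)) (T n (x - g))
      have e : T n (x + g) - T n (x - g) = (2 : ℝ) • T n g := by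
        rw [hadd, hsub, two_smul]; abel
      rw [e, B.q_smul, abs_of_pos (by norm_num : (0:ℝ) < 2)] at h3
      have h4 : B.kappa * (B.q (T n (x + g)) + B.q (T n (x - g))) <
          B.kappa * (B.kappa * (k + 1) + B.kappa * (k + 1)) := by gcongr
      linarith
    obtain ⟨x', hx1, hx2⟩ := hex
    obtain ⟨C, hC0, hC⟩ := hb n
    refine ⟨⟨x', min (δ / (2 * B.kappa)) (1 / ((C + 1) * (3 * B.kappa ^ 2))),
      lt_min (by positivity) (by positivity)⟩, hx1, min_le_left _ _, n, fun y hy => ?_⟩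
    have h1 : B.q (y - x') ≤ 1 / (C + 1) := by
      refine hy.trans ?_
      calc _ ≤ 3 * B.kappa ^ 2 * (1 / ((C + 1) * (3 * B.kappa ^ 2))) := by
            gcongr; exact min_le_right _ _
        _ = _ := by field_simp
    have h2 : B.q (T n (x' - y)) ≤ 1 := by
      refine (hC _).trans ?_
      rw [B.q_sub_comm]
      calc C * B.q (y - x') ≤ C * (1 / (C + 1)) := by gcongr
        _ ≤ 1 := by rw [mul_one_div, div_le_one (by positivity)]; linarith
    have h3 := B.q_triangle (T n y) (T n (x' - y))
    rw [← hadd, add_sub_cancel] at h3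
    have h4 : B.kappa * (k + 1) ≤ B.kappa * (B.q (T n y) + 1) := by
      refine (hx2.trans h3).trans ?_
      gcongr
    have h5 := le_of_mul_le_mul_left h4 hkp
    linarith
  choose nx h1 h2 h3 using step
  let u : ℕ → E × {δ : ℝ // 0 < δ} := fun k => Nat.rec (0, ⟨1, one_pos⟩) (fun k p => nx k p) k
  have hu : ∀ k, u (k + 1) = nx k (u k) := fun k => rfl
  have d1 : ∀ k, B.q ((u (k + 1)).1 - (u k).1) ≤ (u k).2.1 := fun k => by rw [hu]; exact h1 k (u k)
  have d2 : ∀ k, (u (k + 1)).2.1 ≤ (u k).2.1 / (2 * B.kappa) := fun k => by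
    rw [hu]; exact h2 k (u k)
  have d3 : ∀ m k, B.q ((u (k + m)).1 - (u k).1) ≤ 2 * B.kappa * (u k).2.1 := by
    intro m
    induction m with
    | zero => intro k; simp only [add_zero, sub_self, B.q_zero]; have := (u k).2.2; positivity
    | succ m ih =>
      intro k
      have i1 := ih (k + 1)
      have i2 := B.q_tri3 (u (k + (m + 1))).1 (u (k + 1)).1 (u k).1
      rw [show k + 1 + m = k + (m + 1) by ring] at i1
      have i3 := d2 k
      rw [le_div_iff₀ (by positivity)] at i3
      have i4 : B.kappa * (B.q ((u (k + (m + 1))).1 - (u (k + 1)).1) +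
        B.q ((u (k + 1)).1 - (u k).1)) ≤ B.kappa * ((u k).2.1 + (u k).2.1) := by
        gcongr
        · linarith
        · exact d1 k
      linarith
  have d4 : ∀ k, (u k).2.1 ≤ (1/2) ^ k := by
    intro k
    induction k with
    | zero => simp [u]
    | succ k ih =>
      refine (d2 k).trans ?_
      rw [div_le_iff₀ (by positivity), pow_succ]
      have : (0:ℝ) ≤ (1/2)^k := by positivity
      nlinarith
  have hcau : QCauchy B.q (fun k => (u k).1) := by
    intro ε hε
    obtain ⟨k, hk⟩ := exists_pow_lt_of_lt_one (show 0 < ε / (4 * B.kappa ^ 2) by positivity)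
      (show (1/2 : ℝ) < 1 by norm_num)
    refine ⟨k, fun m hm n hn => ?_⟩
    obtain ⟨a, rfl⟩ := Nat.exists_eq_add_of_le hm
    obtain ⟨b, rfl⟩ := Nat.exists_eq_add_of_le hn
    have i1 := d3 a k
    have i2 := d3 b k
    rw [B.q_sub_comm] at i2
    have i3 := B.q_tri3 (u (k + a)).1 (u k).1 (u (k + b)).1
    have i4 := d4 k
    rw [lt_div_iff₀ (by positivity)] at hk
    have i5 : B.kappa * (B.q ((u (k + a)).1 - (u k).1) + B.q ((u k).1 - (u (k + b)).1)) ≤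
      B.kappa * (2 * B.kappa * (1/2)^k + 2 * B.kappa * (1/2)^k) := by
      gcongr
      · exact i1.trans (by gcongr)
      · exact i2.trans (by gcongr)
    have : B.kappa * (2 * B.kappa * (1/2)^k + 2 * B.kappa * (1/2)^k) = (1/2)^k * (4 * B.kappa ^ 2) := by
      ring
    show B.q ((u (k + a)).1 - (u (k + b)).1) < ε
    linarith
  obtain ⟨x, hx⟩ := B.complete _ hcau
  obtain ⟨C, hC⟩ := hp x
  obtain ⟨k, hk⟩ := exists_nat_gt C
  obtain ⟨n, hn⟩ := h3 k (u k)
  rw [← hu] at hn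
  have hδ := (u (k + 1)).2.2
  obtain ⟨n0, hn0⟩ := hx (B.kappa * (u (k + 1)).2.1) (by positivity)
  have i1 := hn0 (k + 1 + n0) (by omega)
  have i2 := d3 n0 (k + 1)
  have i3 := B.q_tri3 x (u (k + 1 + n0)).1 (u (k + 1)).1
  have i4 := hn x (by
    refine i3.trans ?_
    rw [B.q_sub_comm]
    have : B.kappa * (B.q ((u (k + 1 + n0)).1 - x) + B.q ((u (k + 1 + n0)).1 - (u (k + 1)).1)) ≤
      B.kappa * (B.kappa * (u (k + 1)).2.1 + 2 * B.kappa * (u (k + 1)).2.1) := by gcongr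
    refine this.trans (le_of_eq ?_)
    ring)
  have i5 := hC n
  linarith

/-- basis constants of a semi-normalized Schauder basis -/
theorem basis_const (b : QBasis B) (hsemi : b.toBioSystem.SemiNormalized) :
    ∃ K : ℝ, 0 ≤ K ∧ (∀ (a : ℕ → ℝ) (r R : ℕ), r ≤ R →
      B.q (∑ n ∈ Finset.range r, a n • b.vec n) ≤ K * B.q (∑ n ∈ Finset.range R, a n • b.vec n)) ∧
      (∀ (a : ℕ → ℝ) (r R : ℕ), r < R →
      |a r| ≤ K * B.q (∑ n ∈ Finset.range R, a n • b.vec n)) := by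
  have hkp := B.kpos
  obtain ⟨K, hK0, hK⟩ := B.uniform_bdd
    (fun m f => ∑ n ∈ Finset.range m, b.coord n f • b.vec n)
    (by intro n x y; simp only [b.coord_add _ x y trivial trivial, add_smul, Finset.sum_add_distrib])
    (by intro n a x; simp only [b.coord_smul _ a x trivial, mul_smul, Finset.smul_sum])
    (by
      intro m
      induction m with
      | zero => exact ⟨0, le_rfl, by simp [B.q_zero]⟩
      | succ m ih =>
        obtain ⟨C, hC0, hC⟩ := ih
        obtain ⟨D, hD⟩ := b.coord_bdd m
        have hv := B.q_nonneg (b.vec m)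
        refine ⟨B.kappa * (C + |D| * B.q (b.vec m)), by positivity, fun x => ?_⟩
        rw [Finset.sum_range_succ]
        refine (B.q_triangle _ _).trans ?_
        rw [B.q_smul, mul_assoc, add_mul]
        have hx := B.q_nonneg x
        have h1 : |b.coord m x| ≤ |D| * B.q x := (hD x trivial).trans (by
          gcongr; exact le_abs_self D)
        have h2 := hC x
        have h3 : |b.coord m x| * B.q (b.vec m) ≤ |D| * B.q x * B.q (b.vec m) := by gcongr
        have : |D| * B.q x * B.q (b.vec m) = |D| * B.q (b.vec m) * B.q x := by ring
        exact mul_le_mul_of_nonneg_left (by linarith) hkp.le)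
    (by
      intro x
      obtain ⟨n0, h0⟩ := b.expansion x trivial 1 one_pos
      have hfin : ∃ C : ℝ, ∀ n < n0, B.q (∑ k ∈ Finset.range n, b.coord k x • b.vec k) ≤ C := by
        clear h0
        induction n0 with
        | zero => exact ⟨0, by simp⟩
        | succ n0 ih =>
          obtain ⟨C, hC⟩ := ih
          refine ⟨max C (B.q (∑ k ∈ Finset.range n0, b.coord k x • b.vec k)), fun n hn => ?_⟩
          by_cases h : n < n0
          · exact (hC n h).trans (le_max_left _ _)
          · have : n = n0 := by omega
            rw [this]; exact le_max_right _ _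
      obtain ⟨C, hC⟩ := hfin
      refine ⟨max C (B.kappa * (1 + B.q x)), fun n => ?_⟩
      by_cases h : n < n0
      · exact (hC n h).trans (le_max_left _ _)
      · refine le_trans ?_ (le_max_right _ _)
        have h1 := h0 n (by omega)
        have h2 := B.q_triangle ((∑ k ∈ Finset.range n, b.coord k x • b.vec k) - x) x
        rw [sub_add_cancel] at h2
        refine h2.trans ?_
        gcongr)
  obtain ⟨c, C, hc, hcC⟩ := hsemi
  have hcoord : ∀ (a : ℕ → ℝ) (R k : ℕ), k < R →
      b.coord k (∑ n ∈ Finset.range R, a n • b.vec n) = a k := by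
    intro a R k hk
    have : ∀ R : ℕ, b.coord k (∑ n ∈ Finset.range R, a n • b.vec n) =
        ∑ n ∈ Finset.range R, a n * (if k = n then 1 else 0) := by
      intro R
      induction R with
      | zero =>
        have := b.coord_smul k 0 0 trivial
        simpa using this
      | succ R ih =>
        rw [Finset.sum_range_succ, Finset.sum_range_succ, b.coord_add _ _ _ trivial trivial, ih,
          b.coord_smul _ _ _ trivial, b.biorth]
    rw [this R]
    simp [hk]
  have hpart : ∀ (a : ℕ → ℝ) (r R : ℕ), r ≤ R →
      B.q (∑ n ∈ Finset.range r, a n • b.vec n) ≤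
        K * B.q (∑ n ∈ Finset.range R, a n • b.vec n) := by
    intro a r R hr
    have h := hK r (∑ n ∈ Finset.range R, a n • b.vec n)
    have e : ∑ n ∈ Finset.range r, b.coord n (∑ n ∈ Finset.range R, a n • b.vec n) • b.vec n =
        ∑ n ∈ Finset.range r, a n • b.vec n := by
      apply Finset.sum_congr rfl
      intro n hn
      rw [hcoord a R n (by simp at hn; omega)]
    simpa only [e] using h
  refine ⟨max K (B.kappa * (K + K) / c), le_max_of_le_left hK0, ?_, ?_⟩
  · intro a r R hr
    refine (hpart a r R hr).trans ?_
    have := B.q_nonneg (∑ n ∈ Finset.range R, a n • b.vec n)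
    gcongr
    exact le_max_left _ _
  · intro a r R hr
    have h0 := B.q_nonneg (∑ n ∈ Finset.range R, a n • b.vec n)
    have h1 := hpart a (r + 1) R hr
    have h2 := hpart a r R hr.le
    have h3 := B.q_sub (∑ n ∈ Finset.range (r + 1), a n • b.vec n)
      (∑ n ∈ Finset.range r, a n • b.vec n)
    rw [Finset.sum_range_succ, add_sub_cancel_left, B.q_smul] at h3
    rw [Finset.sum_range_succ] at h1
    have h4 : |a r| * c ≤ B.kappa * (K + K) * B.q (∑ n ∈ Finset.range R, a n • b.vec n) := by
      have := (hcC r).1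
      calc |a r| * c ≤ |a r| * B.q (b.vec r) := by gcongr
        _ ≤ _ := h3
        _ ≤ B.kappa * (K * B.q (∑ n ∈ Finset.range R, a n • b.vec n) +
              K * B.q (∑ n ∈ Finset.range R, a n • b.vec n)) := by gcongr
        _ = _ := by ring
    calc |a r| ≤ B.kappa * (K + K) / c * B.q (∑ n ∈ Finset.range R, a n • b.vec n) := by
          rw [div_mul_eq_mul_div, le_div_iff₀ hc]; exact h4
      _ ≤ _ := by gcongr; exact le_max_right _ _

end QuasiBanach

/-! ### Growth of the blocks -/

theorem Lam_star (S : SubsymmetricSpace) {m n d : ℕ} (hm : 1 ≤ m) (h : m ≤ d * n) :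
    S.Lam n * m ≤ 2 * d * n * S.Lam m := by
  have hd : 1 ≤ d := by
    rcases Nat.eq_zero_or_pos d with h0 | h0
    · subst h0; omega
    · exact h0
  have h1 := S.Lam_ratio hm h
  have h2 := S.Lam_mono (show n ≤ d * n from Nat.le_mul_of_pos_left n hd)
  have h3 : S.Lam n * m ≤ S.Lam (d * n) * m := by gcongr
  push_cast at h1
  linarith

theorem growN (σ : OrderedPartition) (hMN : ∃ c : ℝ, ∀ r : ℕ, (σ.M r : ℝ) ≤ c * (σ.N r : ℝ)) :
    ∃ c : ℕ, 1 ≤ c ∧ ∀ r, σ.M r ≤ c * σ.N r := by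
  obtain ⟨c, hc⟩ := hMN
  obtain ⟨k, hk⟩ := exists_nat_ge c
  refine ⟨k + 1, by omega, fun r => ?_⟩
  have h1 : (σ.M r : ℝ) ≤ (k + 1 : ℕ) * (σ.N r : ℝ) := by
    refine (hc r).trans ?_
    gcongr
    push_cast; linarith
  exact_mod_cast h1

theorem grow (σ : OrderedPartition) {c : ℕ} (hc : 1 ≤ c) (hM : ∀ r, σ.M r ≤ c * σ.N r) (D : ℕ) :
    ∃ s, 1 ≤ s ∧ ∀ k n, k + s ≤ n → D * σ.N k ≤ σ.N n := by
  have a1 : ∀ r i, i * σ.M r ≤ c * (σ.M (r + i) - σ.M r) := by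
    intro r i
    induction i with
    | zero => simp
    | succ i ih =>
      have h1 := hM (r + i)
      have h2 := σ.M_mono (show r ≤ r + i by omega)
      have h3 := σ.M_succ (r + i)
      rw [show r + (i + 1) = r + i + 1 by ring, h3]
      have : σ.M (r + i) + σ.N (r + i) - σ.M r = (σ.M (r + i) - σ.M r) + σ.N (r + i) := by omega
      rw [this, Nat.mul_add, Nat.succ_mul]
      omega
  have a2 : ∀ r, 2 * σ.M r ≤ σ.M (r + c) := by
    intro r
    have := Nat.le_of_mul_le_mul_left (a1 r c) hc
    have h2 := σ.M_mono (show r ≤ r + c by omega)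
    omega
  have a3 : ∀ i r, 2 ^ i * σ.M r ≤ σ.M (r + c * i) := by
    intro i
    induction i with
    | zero => simp
    | succ i ih =>
      intro r
      have h1 := ih r
      have h2 := a2 (r + c * i)
      rw [show r + c * (i + 1) = r + c * i + c by ring, pow_succ]
      have : 2 ^ i * 2 * σ.M r = 2 * (2 ^ i * σ.M r) := by ring
      omega
  refine ⟨1 + c * (c * D), by omega, fun k n hn => ?_⟩
  have h1 := a3 (c * D) (k + 1)
  have h2 := σ.M_mono (show k + 1 + c * (c * D) ≤ n by omega)
  have h3 : σ.N k ≤ σ.M (k + 1) := by rw [σ.M_succ]; omega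
  have h4 : c * D ≤ 2 ^ (c * D) := Nat.lt_two_pow_self.le
  have h5 : c * (D * σ.N k) ≤ c * σ.N n := by
    calc c * (D * σ.N k) = (c * D) * σ.N k := by ring
      _ ≤ 2 ^ (c * D) * σ.M (k + 1) := Nat.mul_le_mul h4 h3
      _ ≤ σ.M n := h1.trans h2
      _ ≤ _ := hM n
  exact Nat.le_of_mul_le_mul_left h5 hc

theorem decay_abs (u : ℕ → ℝ) (C : ℝ) (hC : 1 ≤ C) (s : ℕ) (hs : 1 ≤ s) (hu : ∀ n, 0 ≤ u n)
    (h1 : ∀ k n, k ≤ n → u k ≤ C * u n) (h2 : ∀ k n, k + s ≤ n → u k ≤ u n / 2) :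
    ∀ k n, k ≤ n → u k ≤ C * (1 / 2) ^ ((n - k) / s) * u n := by
  have key : ∀ d k n, k + d * s ≤ n → u k ≤ C * (1 / 2) ^ d * u n := by
    intro d
    induction d with
    | zero => intro k n h; simpa using h1 k n (by omega)
    | succ d ih =>
      intro k n h
      have e1 := h2 k (k + s) le_rfl
      have e2 := ih (k + s) n (by rw [Nat.succ_mul] at h; omega)
      rw [pow_succ]
      linarith
  intro k n h
  apply key
  have := Nat.div_mul_le_self (n - k) s
  omega

theorem decay (S : SubsymmetricSpace) (σ : OrderedPartition)
    (hLRP : LRP S.Lam) (hURP : URP S.Lam) {c : ℕ} (hc : 1 ≤ c) (hM : ∀ r, σ.M r ≤ c * σ.N r) :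
    ∃ s : ℕ, 1 ≤ s ∧ ∃ C : ℝ, 1 ≤ C ∧ ∀ k n, k ≤ n →
      S.Lam (σ.N k) ≤ C * (1 / 2) ^ ((n - k) / s) * S.Lam (σ.N n) ∧
      (σ.N k : ℝ) / S.Lam (σ.N k) ≤
        C * (1 / 2) ^ ((n - k) / s) * ((σ.N n : ℝ) / S.Lam (σ.N n)) := by
  obtain ⟨b1, hb1, hL⟩ := hLRP
  obtain ⟨b2, hb2, hU⟩ := hURP
  obtain ⟨s, hs, hg⟩ := grow σ hc hM (b1 + b2 ^ 2)
  have hcR : (1 : ℝ) ≤ c := by exact_mod_cast hc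
  have hle : ∀ k n, k ≤ n → σ.N k ≤ c * σ.N n := by
    intro k n h
    rcases Nat.eq_or_lt_of_le h with h | h
    · subst h; exact Nat.le_mul_of_pos_left _ hc
    · have h1 := hM n
      have h2 := σ.M_mono (show k + 1 ≤ n from h)
      rw [σ.M_succ] at h2
      omega
  have hpos : ∀ n, 0 < S.Lam (σ.N n) := fun n => S.Lam_pos (σ.N_pos n)
  have hNpos : ∀ n, (0 : ℝ) < σ.N n := fun n => by exact_mod_cast σ.N_pos n
  refine ⟨s, hs, 2 * c, by linarith, fun k n hkn => ⟨?_, ?_⟩⟩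
  · apply decay_abs (fun n => S.Lam (σ.N n)) (2 * c) (by linarith) s hs
      (fun n => (hpos n).le) _ _ k n hkn
    · intro k n h
      have h1 := (S.Lam_mono (hle k n h)).trans (S.Lam_mul c (σ.N n))
      have := hpos n
      have h2 : (c : ℝ) * S.Lam (σ.N n) ≤ 2 * c * S.Lam (σ.N n) := by nlinarith
      exact h1.trans h2
    · intro k n h
      have h1 := hL (σ.N k) (σ.N_pos k)
      have h2 := S.Lam_mono (show b1 * σ.N k ≤ σ.N n by
        refine le_trans ?_ (hg k n h)
        exact Nat.mul_le_mul_right _ (by omega))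
      show S.Lam (σ.N k) ≤ S.Lam (σ.N n) / 2
      linarith
  · apply decay_abs (fun n => (σ.N n : ℝ) / S.Lam (σ.N n)) (2 * c) (by linarith) s hs
      (fun n => (div_pos (hNpos n) (hpos n)).le) _ _ k n hkn
    · intro k n h
      have h1 := Lam_star S (σ.N_pos k) (hle k n h)
      show (σ.N k : ℝ) / S.Lam (σ.N k) ≤ 2 * c * ((σ.N n : ℝ) / S.Lam (σ.N n))
      rw [← mul_div_assoc, div_le_div_iff₀ (hpos k) (hpos n)]
      linarith
    · intro k n h
      have hb : (0:ℝ) < (b2 : ℝ) := by exact_mod_cast hb2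
      have h1 := hU (σ.N k) (σ.N_pos k)
      have h2 := hU (b2 * σ.N k) (Nat.mul_pos hb2 (σ.N_pos k))
      have h3 : b2 ^ 2 * σ.N k ≤ σ.N n := by
        refine le_trans ?_ (hg k n h)
        exact Nat.mul_le_mul_right _ (by omega)
      have h4 := S.Lam_ratio (Nat.mul_pos (pow_pos hb2 2) (σ.N_pos k)) h3
      have e : b2 * (b2 * σ.N k) = b2 ^ 2 * σ.N k := by ring
      rw [e] at h2
      have h5 : 4 * S.Lam (b2 ^ 2 * σ.N k) ≤ (b2 : ℝ) ^ 2 * S.Lam (σ.N k) := by nlinarith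
      push_cast at h4
      have h6 : (b2 : ℝ) ^ 2 * (2 * (S.Lam (σ.N n) * σ.N k)) ≤
          (b2 : ℝ) ^ 2 * (σ.N n * S.Lam (σ.N k)) := by
        have := mul_le_mul_of_nonneg_left h5 (hNpos n).le
        linarith
      have h7 := le_of_mul_le_mul_left h6 (by positivity)
      show (σ.N k : ℝ) / S.Lam (σ.N k) ≤ (σ.N n : ℝ) / S.Lam (σ.N n) / 2
      rw [div_div, div_le_div_iff₀ (hpos k) (by have := hpos n; positivity)]
      linarith

theorem Lam_unbdd (S : SubsymmetricSpace) (σ : OrderedPartition)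
    (hLRP : LRP S.Lam) {c : ℕ} (hc : 1 ≤ c) (hM : ∀ r, σ.M r ≤ c * σ.N r) (θ : ℝ) :
    ∃ r, ∀ n, r ≤ n → θ < S.Lam (σ.N n) := by
  obtain ⟨b1, hb1, hL⟩ := hLRP
  have h1 : ∀ i : ℕ, 2 ^ i * S.Lam 1 ≤ S.Lam (b1 ^ i) := by
    intro i
    induction i with
    | zero => simp
    | succ i ih =>
      have := hL (b1 ^ i) (pow_pos hb1 i)
      rw [pow_succ, pow_succ, mul_comm (b1 ^ i)]
      linarith
  have hp := S.Lam_pos (le_refl 1)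
  obtain ⟨i, hi⟩ := pow_unbounded_of_one_lt (θ / S.Lam 1) (show (1:ℝ) < 2 by norm_num)
  rw [div_lt_iff₀ hp] at hi
  obtain ⟨s, hs, hg⟩ := grow σ hc hM (b1 ^ i)
  refine ⟨s, fun n hn => ?_⟩
  have h2 := hg 0 n (by omega)
  have h3 : b1 ^ i ≤ σ.N n := by
    have := σ.N_pos 0
    have : b1 ^ i ≤ b1 ^ i * σ.N 0 := Nat.le_mul_of_pos_right _ this
    omega
  have := S.Lam_mono h3
  linarith [h1 i]

theorem exists_cut (p : ℕ → Prop) (h : ∃ r, ∀ n, r ≤ n → p n) :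
    ∃ r, (∀ n, r ≤ n → p n) ∧ (r = 0 ∨ ∃ r', r = r' + 1 ∧ ¬ p r') := by
  refine ⟨Nat.find h, Nat.find_spec h, ?_⟩
  rcases hr : Nat.find h with _ | r'
  · exact Or.inl rfl
  · right
    refine ⟨r', rfl, fun hp => ?_⟩
    have := Nat.find_min h (m := r') (by omega)
    apply this
    intro n hn
    rcases Nat.eq_or_lt_of_le hn with h' | h'
    · rwa [← h']
    · have h2 := Nat.find_spec h
      rw [hr] at h2
      exact h2 n h'

/-! ### The map `H` and the quasi-norm of `𝕐` -/

section Y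
variable {E : Type*} [AddCommGroup E] [Module ℝ E] (B : QuasiBanach E) (b : QBasis B)
  (S : SubsymmetricSpace) (σ : OrderedPartition)

theorem vstar_zero {f : ℕ → ℝ} {R : ℕ} (h : ∀ k, σ.M R ≤ k → f k = 0) (n : ℕ) (hn : R ≤ n) :
    vstar S σ n f = 0 := by
  unfold vstar
  rw [Finset.sum_eq_zero, mul_zero]
  intro i hi
  apply h
  have := (σ.mem_part_iff n i).mp hi
  have := σ.M_mono hn
  omega

theorem vstar_add (n : ℕ) (f g : ℕ → ℝ) :
    vstar S σ n (f + g) = vstar S σ n f + vstar S σ n g := by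
  unfold vstar
  simp only [Pi.add_apply, Finset.sum_add_distrib, mul_add]

theorem vstar_smul (n : ℕ) (a : ℝ) (f : ℕ → ℝ) :
    vstar S σ n (a • f) = a * vstar S σ n f := by
  unfold vstar
  simp only [Pi.smul_apply, smul_eq_mul, ← Finset.mul_sum]
  ring

theorem Hmap_eq {f : ℕ → ℝ} {R : ℕ} (h : ∀ k, σ.M R ≤ k → f k = 0) :
    Hmap B b S σ f = ∑ n ∈ Finset.range R, vstar S σ n f • b.vec n := by
  unfold Hmap
  apply finsum_eq_sum_of_support_subset
  intro n hn
  rw [Finset.coe_range, Set.mem_Iio]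
  by_contra hc
  apply hn
  show vstar S σ n f • b.vec n = 0
  rw [vstar_zero S σ h n (by omega), zero_smul]

theorem bound_M2 {f g : ℕ → ℝ} (hf : FS f) (hg : FS g) :
    ∃ R, (∀ k, σ.M R ≤ k → f k = 0) ∧ (∀ k, σ.M R ≤ k → g k = 0) := by
  obtain ⟨R1, h1⟩ := σ.bound_M hf
  obtain ⟨R2, h2⟩ := σ.bound_M hg
  refine ⟨max R1 R2, fun k hk => h1 k ?_, fun k hk => h2 k ?_⟩
  · exact (σ.M_mono (le_max_left R1 R2)).trans hk
  · exact (σ.M_mono (le_max_right R1 R2)).trans hk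

theorem Hmap_add {f g : ℕ → ℝ} (hf : FS f) (hg : FS g) :
    Hmap B b S σ (f + g) = Hmap B b S σ f + Hmap B b S σ g := by
  obtain ⟨R, h1, h2⟩ := bound_M2 σ hf hg
  rw [Hmap_eq B b S σ h1, Hmap_eq B b S σ h2, Hmap_eq B b S σ (R := R)
    (fun k hk => by simp [h1 k hk, h2 k hk]), ← Finset.sum_add_distrib]
  simp only [vstar_add, add_smul]

theorem Hmap_smul {f : ℕ → ℝ} (a : ℝ) (hf : FS f) :
    Hmap B b S σ (a • f) = a • Hmap B b S σ f := by
  obtain ⟨R, h1⟩ := σ.bound_M hf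
  rw [Hmap_eq B b S σ h1, Hmap_eq B b S σ (R := R)
    (fun k hk => by simp [h1 k hk]), Finset.smul_sum]
  simp only [vstar_smul, mul_smul]

theorem YNorm_nonneg (f : ℕ → ℝ) : 0 ≤ YNorm B b S σ f :=
  add_nonneg (S.nrm_nonneg _) (B.q_nonneg _)

theorem YNorm_add {f g : ℕ → ℝ} (hf : FS f) (hg : FS g) :
    YNorm B b S σ (f + g) ≤ B.kappa * (YNorm B b S σ f + YNorm B b S σ g) := by
  unfold YNorm
  rw [Hmap_add B b S σ hf hg, σ.Qavg_add]
  have h1 := S.tri (σ.FS_Qavg hf) (σ.FS_Qavg hg)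
  have h2 := B.q_triangle (Hmap B b S σ f) (Hmap B b S σ g)
  have h3 := B.one_le_kappa
  have h4 := S.nrm_nonneg (σ.Qavg f)
  have h5 := S.nrm_nonneg (σ.Qavg g)
  nlinarith

theorem YNorm_smul {f : ℕ → ℝ} (a : ℝ) (hf : FS f) :
    YNorm B b S σ (a • f) = |a| * YNorm B b S σ f := by
  unfold YNorm
  rw [Hmap_smul B b S σ a hf, σ.Qavg_smul, S.nrm_smul, B.q_smul, mul_add]

theorem Q_le_YNorm (f : ℕ → ℝ) : S.nrm (σ.Qavg f) ≤ YNorm B b S σ f :=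
  le_add_of_nonneg_right (B.q_nonneg _)

theorem H_le_YNorm (f : ℕ → ℝ) : B.q (Hmap B b S σ f) ≤ YNorm B b S σ f :=
  le_add_of_nonneg_left (S.nrm_nonneg _)

theorem Y_const (hsemi : b.toBioSystem.SemiNormalized) : ∃ K : ℝ, 0 ≤ K ∧
    (∀ f, FS f → ∀ r, B.q (∑ n ∈ Finset.range r, vstar S σ n f • b.vec n) ≤ K * YNorm B b S σ f) ∧
    (∀ f, FS f → ∀ n, |vstar S σ n f| ≤ K * YNorm B b S σ f) := by
  obtain ⟨K, hK0, h1, h2⟩ := B.basis_const b hsemi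
  refine ⟨K, hK0, ?_, ?_⟩
  · intro f hf r
    obtain ⟨R, hR⟩ := σ.bound_M hf
    have hR' : ∀ k, σ.M (R + r) ≤ k → f k = 0 := fun k hk =>
      hR k ((σ.M_mono (by omega)).trans hk)
    have h3 := h1 (fun n => vstar S σ n f) r (R + r) (by omega)
    rw [← Hmap_eq B b S σ hR'] at h3
    refine h3.trans ?_
    gcongr
    exact H_le_YNorm B b S σ f
  · intro f hf r
    obtain ⟨R, hR⟩ := σ.bound_M hf
    have hR' : ∀ k, σ.M (R + r + 1) ≤ k → f k = 0 := fun k hk =>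
      hR k ((σ.M_mono (by omega)).trans hk)
    have h3 := h2 (fun n => vstar S σ n f) r (R + r + 1) (by omega)
    rw [← Hmap_eq B b S σ hR'] at h3
    refine h3.trans ?_
    gcongr
    exact H_le_YNorm B b S σ f

theorem Pavg_vstar (f : ℕ → ℝ) {n k : ℕ} (hk : k ∈ σ.part n) :
    σ.Pavg f k * S.Lam (σ.N n) = vstar S σ n f := by
  rw [σ.Pavg_apply f hk]; unfold vstar; ring

theorem fsplit (f : ℕ → ℝ) (k : ℕ) : f k = σ.Qavg f k + σ.Pavg f k := by
  simp [OrderedPartition.Qavg]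

/-- lower (weak type) estimate -/
theorem Y_low (hsemi : b.toBioSystem.SemiNormalized) {c : ℕ} (hM : ∀ r, σ.M r ≤ c * σ.N r) :
    ∃ K : ℝ, 0 ≤ K ∧ ∀ f, FS f → ∀ (t : ℝ) (A : Finset ℕ), 0 ≤ t → (∀ k ∈ A, t ≤ |f k|) →
      t * S.Lam A.card ≤ K * YNorm B b S σ f := by
  obtain ⟨K, hK0, _, hv⟩ := Y_const B b S σ hsemi
  refine ⟨2 + 2 * (c + 1) * K, by positivity, fun f hf t A ht hA => ?_⟩
  have hY := YNorm_nonneg B b S σ f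
  set A1 := A.filter (fun k => t / 2 ≤ |σ.Qavg f k|) with hA1
  set A2 := A.filter (fun k => ¬ t / 2 ≤ |σ.Qavg f k|) with hA2
  have hcard : A1.card + A2.card = A.card := Finset.card_filter_add_card_filter_not _
  have h1 : t / 2 * S.Lam A1.card ≤ YNorm B b S σ f :=
    (S.Lam_le_nrm A1 (σ.FS_Qavg hf) (by linarith) (fun k hk => (Finset.mem_filter.mp hk).2)).trans
      (Q_le_YNorm B b S σ f)
  have h2 : t / 2 * S.Lam A2.card ≤ (c + 1) * K * YNorm B b S σ f := by
    rcases A2.eq_empty_or_nonempty with he | hne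
    · rw [he, Finset.card_empty, S.Lam_zero, mul_zero]; positivity
    · obtain ⟨k, hk, hmax⟩ := A2.exists_max_image σ.blk hne
      set n := σ.blk k with hn
      have hsub : A2 ⊆ Finset.range (σ.M (n + 1)) := by
        intro i hi
        have := hmax i hi
        rw [Finset.mem_range]
        exact lt_of_lt_of_le ((σ.mem_part_iff _ _).mp (σ.blk_mem i)).2 (σ.M_mono (by omega))
      have hc1 := Finset.card_le_card hsub
      rw [Finset.card_range, σ.M_succ] at hc1
      have hc2 : A2.card ≤ (c + 1) * σ.N n := by
        have := hM n
        rw [Nat.succ_mul]; omega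
      have h3 := (S.Lam_mono hc2).trans (S.Lam_mul _ _)
      have h4 := Pavg_vstar S σ f (σ.blk_mem k)
      rw [← hn] at h4
      have hkA := (Finset.mem_filter.mp hk)
      have h5 : t / 2 ≤ |σ.Pavg f k| := by
        have := hA k hkA.1
        rw [fsplit σ f k] at this
        have h6 := abs_add_le (σ.Qavg f k) (σ.Pavg f k)
        have h7 := hkA.2
        push Not at h7
        linarith
      have hL := S.Lam_nonneg (σ.N n)
      have h6 : t / 2 * S.Lam (σ.N n) ≤ K * YNorm B b S σ f := by
        refine le_trans ?_ (hv f hf n)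
        rw [← h4, abs_mul, abs_of_nonneg hL]
        gcongr
      push_cast at h3
      calc t / 2 * S.Lam A2.card ≤ t / 2 * ((c + 1) * S.Lam (σ.N n)) := by gcongr
        _ = (c + 1) * (t / 2 * S.Lam (σ.N n)) := by ring
        _ ≤ (c + 1) * (K * YNorm B b S σ f) := by gcongr
        _ = _ := by ring
  have h3 := S.Lam_add A1.card A2.card
  rw [hcard] at h3
  have h4 : t * S.Lam A.card ≤ t * (S.Lam A1.card + S.Lam A2.card) := by gcongr
  linarith

theorem vec_bound (hsemi : b.toBioSystem.SemiNormalized) :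
    ∃ C : ℝ, 0 ≤ C ∧ ∀ n, B.q (b.vec n) ≤ C := by
  obtain ⟨c, C, hc, h⟩ := hsemi
  exact ⟨C, (B.q_nonneg _).trans (h 0).2, fun n => (h n).2⟩

theorem abs_vstar_le (n : ℕ) (f : ℕ → ℝ) :
    |vstar S σ n f| ≤ S.Lam (σ.N n) / (σ.N n : ℝ) * ∑ j ∈ σ.part n, |f j| := by
  have hL := S.Lam_nonneg (σ.N n)
  unfold vstar
  rw [abs_mul, abs_of_nonneg (by positivity)]
  gcongr
  exact Finset.abs_sum_le_sum_abs _ _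

/-- bounded functions on an initial segment of blocks -/
theorem Y_E1 (hsemi : b.toBioSystem.SemiNormalized) (hLRP : LRP S.Lam) (hURP : URP S.Lam)
    {c : ℕ} (hc : 1 ≤ c) (hM : ∀ r, σ.M r ≤ c * σ.N r) :
    ∃ K : ℝ, 0 ≤ K ∧ ∀ (u : ℕ → ℝ) (t : ℝ) (r : ℕ), 0 ≤ t → (∀ k, |u k| ≤ t) →
      (∀ k, σ.M (r + 1) ≤ k → u k = 0) → YNorm B b S σ u ≤ K * (t * S.Lam (σ.N r)) := by
  obtain ⟨s, hs, C, hC, hd⟩ := decay S σ hLRP hURP hc hM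
  obtain ⟨G, hG0, hG⟩ := B.q_geom s hs
  obtain ⟨V, hV0, hV⟩ := vec_bound B b hsemi
  refine ⟨3 * (c + 1) + G * (C * V), by positivity, fun u t r ht hu hr => ?_⟩
  have hF : FS u := FS.of_range _ hr
  have hL := S.Lam_nonneg (σ.N r)
  have h1 : S.nrm u ≤ t * ((c + 1) * S.Lam (σ.N r)) := by
    refine (S.nrm_le_Lam (Finset.range (σ.M (r + 1))) ht (fun k _ => hu k)
      (fun k hk => hr k (by simpa using hk))).trans ?_
    rw [Finset.card_range]
    have h2 : σ.M (r + 1) ≤ (c + 1) * σ.N r := by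
      rw [σ.M_succ, Nat.succ_mul]
      have := hM r
      omega
    have h3 := (S.Lam_mono h2).trans (S.Lam_mul _ _)
    push_cast at h3
    gcongr
  have h2 := Qavg_bound S σ hF
  have h3 : B.q (Hmap B b S σ u) ≤ G * (t * (C * S.Lam (σ.N r)) * V) := by
    rw [Hmap_eq B b S σ hr, ← Finset.sum_range_reflect]
    apply hG _ _ _ (by positivity)
    intro n hn
    rw [B.q_smul]
    set m := r + 1 - 1 - n with hm
    have hN : (0 : ℝ) < σ.N m := by exact_mod_cast σ.N_pos m
    have h4 : |vstar S σ m u| ≤ t * S.Lam (σ.N m) := by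
      refine (abs_vstar_le S σ m u).trans ?_
      have h5 : ∑ j ∈ σ.part m, |u j| ≤ σ.N m * t := by
        have := Finset.sum_le_card_nsmul (σ.part m) (fun j => |u j|) t (fun j _ => hu j)
        rw [nsmul_eq_mul] at this
        exact this
      have hLm := S.Lam_nonneg (σ.N m)
      calc _ ≤ S.Lam (σ.N m) / (σ.N m : ℝ) * (σ.N m * t) := by gcongr
        _ = _ := by field_simp
    have h5 := (hd m r (by omega)).1
    have e : r - m = n := by omega
    rw [e] at h5
    have hLm := S.Lam_nonneg (σ.N m)
    calc |vstar S σ m u| * B.q (b.vec m) ≤ t * S.Lam (σ.N m) * V := by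
          have := hV m
          have := B.q_nonneg (b.vec m)
          gcongr
      _ ≤ t * (C * (1 / 2) ^ (n / s) * S.Lam (σ.N r)) * V := by gcongr
      _ = _ := by ring
  unfold YNorm
  have e : (3 * (c + 1) + G * (C * V)) * (t * S.Lam (σ.N r)) =
      3 * (t * ((c + 1) * S.Lam (σ.N r))) + G * (t * (C * S.Lam (σ.N r)) * V) := by ring
  rw [e]
  linarith

/-- functions with small support on a tail of blocks -/
theorem Y_E2 (hsemi : b.toBioSystem.SemiNormalized) (hLRP : LRP S.Lam) (hURP : URP S.Lam)
    {c : ℕ} (hc : 1 ≤ c) (hM : ∀ r, σ.M r ≤ c * σ.N r) :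
    ∃ K : ℝ, 0 ≤ K ∧ ∀ (h : ℕ → ℝ) (A : Finset ℕ) (r : ℕ), (∀ k, k ∉ A → h k = 0) →
      A.card ≤ σ.N r → (∀ k, k < σ.M r → h k = 0) → YNorm B b S σ h ≤ K * S.nrm h := by
  obtain ⟨s, hs, C, hC, hd⟩ := decay S σ hLRP hURP hc hM
  obtain ⟨G, hG0, hG⟩ := B.q_geom s hs
  obtain ⟨V, hV0, hV⟩ := vec_bound B b hsemi
  refine ⟨3 + G * (4 * C * V), by positivity, fun h A r hA hcard hr => ?_⟩
  have hF : FS h := FS.of_finset A hA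
  have hnn := S.nrm_nonneg h
  have h2 := Qavg_bound S σ hF
  obtain ⟨R, hR⟩ := σ.bound_M hF
  have hR' : ∀ k, σ.M (r + R) ≤ k → h k = 0 := fun k hk =>
    hR k ((σ.M_mono (by omega)).trans hk)
  have h3 : B.q (Hmap B b S σ h) ≤ G * (4 * C * S.nrm h * V) := by
    rw [Hmap_eq B b S σ hR', Finset.sum_range_add, Finset.sum_eq_zero, zero_add]
    · apply hG _ _ _ (by positivity)
      intro n hn
      rw [B.q_smul]
      set m := r + n with hm
      have hNm : (0 : ℝ) < σ.N m := by exact_mod_cast σ.N_pos m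
      have hNr : (0 : ℝ) < σ.N r := by exact_mod_cast σ.N_pos r
      have hLm := S.Lam_pos (σ.N_pos m)
      have hLr := S.Lam_pos (σ.N_pos r)
      set D := (σ.part m).filter (· ∈ A) with hD
      have e1 : ∑ j ∈ σ.part m, |h j| = ∑ j ∈ D, |h j| := by
        rw [hD, Finset.sum_filter]
        apply Finset.sum_congr rfl
        intro j _
        by_cases hj : j ∈ A
        · simp [hj]
        · simp [hj, hA j hj]
      have hDc : D.card ≤ 1 * σ.N r := by
        rw [one_mul]
        refine le_trans (Finset.card_le_card ?_) hcard
        intro j hj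
        exact (Finset.mem_filter.mp hj).2
      have h5 : ∑ j ∈ D, |h j| ≤ 4 * ((σ.N r : ℝ) / S.Lam (σ.N r)) * S.nrm h := by
        rcases Nat.eq_zero_or_pos D.card with h0 | h0
        · rw [Finset.card_eq_zero.mp h0, Finset.sum_empty]; positivity
        · have hLD := S.Lam_pos h0
          have habsF : FS (fun j => |h j|) := hF.of_imp (fun n hn => by simp [hn])
          have g1 := finset_sum_bound S habsF D
          rw [abs_of_nonneg (Finset.sum_nonneg (fun _ _ => abs_nonneg _))] at g1
          have g2 : S.nrm (fun j => |h j|) ≤ S.nrm h := S.nrm_mono hF (by simp)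
          have g3 := Lam_star S h0 hDc
          have g4 : (∑ j ∈ D, |h j|) * S.Lam D.card ≤ 2 * D.card * S.nrm h := g1.trans (by gcongr)
          rw [mul_div_assoc', div_mul_eq_mul_div, le_div_iff₀ hLr]
          have g5 : (∑ j ∈ D, |h j|) * S.Lam (σ.N r) * S.Lam D.card ≤
              4 * (σ.N r : ℝ) * S.nrm h * S.Lam D.card := by
            calc _ = ((∑ j ∈ D, |h j|) * S.Lam D.card) * S.Lam (σ.N r) := by ring
              _ ≤ (2 * D.card * S.nrm h) * S.Lam (σ.N r) := by gcongr
              _ = 2 * S.nrm h * (S.Lam (σ.N r) * D.card) := by ring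
              _ ≤ 2 * S.nrm h * (2 * (1 : ℕ) * σ.N r * S.Lam D.card) := by gcongr
              _ = _ := by push_cast; ring
          exact le_of_mul_le_mul_right g5 hLD
      have h6 := (hd r m (by omega)).2
      have e : m - r = n := by omega
      rw [e] at h6
      have h7 : |vstar S σ m h| ≤ 4 * C * S.nrm h * (1 / 2) ^ (n / s) := by
        refine (abs_vstar_le S σ m h).trans ?_
        rw [e1]
        calc _ ≤ S.Lam (σ.N m) / (σ.N m : ℝ) * (4 * ((σ.N r : ℝ) / S.Lam (σ.N r)) * S.nrm h) := by
              gcongr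
          _ ≤ S.Lam (σ.N m) / (σ.N m : ℝ) *
              (4 * (C * (1 / 2) ^ (n / s) * ((σ.N m : ℝ) / S.Lam (σ.N m))) * S.nrm h) := by gcongr
          _ = _ := by field_simp
      calc |vstar S σ m h| * B.q (b.vec m) ≤ (4 * C * S.nrm h * (1 / 2) ^ (n / s)) * V := by
            have := hV m
            have := B.q_nonneg (b.vec m)
            gcongr
        _ = _ := by ring
    · intro n hn
      have hn' : n < r := by simpa using hn
      have : vstar S σ n h = 0 := by
        unfold vstar
        rw [Finset.sum_eq_zero, mul_zero]
        intro i hi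
        apply hr
        have := ((σ.mem_part_iff n i).mp hi).2
        have := σ.M_mono (show n + 1 ≤ r by omega)
        omega
      rw [this, zero_smul]
  unfold YNorm
  have e : (3 + G * (4 * C * V)) * S.nrm h = 3 * S.nrm h + G * (4 * C * S.nrm h * V) := by ring
  rw [e]
  linarith

end Y

section Y2
variable {E : Type*} [AddCommGroup E] [Module ℝ E] (B : QuasiBanach E) (b : QBasis B)
  (S : SubsymmetricSpace) (σ : OrderedPartition)

theorem ind_part_eq (f : ℕ → ℝ) {r n i : ℕ} (hn : n < r) (hi : i ∈ σ.part n) :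
    ({k | k < σ.M r} : Set ℕ).indicator f i = f i := by
  have h : i < σ.M r := (σ.mem_union_iff r i).mp ⟨n, hn, hi⟩
  exact Set.indicator_of_mem (s := {k | k < σ.M r}) h f

theorem ind_part_zero (f : ℕ → ℝ) {r i : ℕ} (hi : σ.M r ≤ i) :
    ({k | k < σ.M r} : Set ℕ).indicator f i = 0 := by
  apply Set.indicator_of_notMem
  simpa using hi

theorem Qavg_start (f : ℕ → ℝ) (r : ℕ) :
    σ.Qavg (({k | k < σ.M r} : Set ℕ).indicator f) =
      ({k | k < σ.M r} : Set ℕ).indicator (σ.Qavg f) := by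
  ext k
  by_cases hk : k < σ.M r
  · obtain ⟨n, hn, hkn⟩ := (σ.mem_union_iff r k).mpr hk
    rw [ind_part_eq σ _ hn hkn]
    unfold OrderedPartition.Qavg
    rw [Pi.sub_apply, Pi.sub_apply, ind_part_eq σ _ hn hkn, σ.Pavg_apply _ hkn,
      σ.Pavg_apply _ hkn, Finset.sum_congr rfl (fun i hi => ind_part_eq σ f hn hi)]
  · push Not at hk
    rw [ind_part_zero σ _ hk]
    unfold OrderedPartition.Qavg
    have hm := σ.blk_mem k
    have hb := (σ.mem_part_iff _ _).mp hm
    have hr : r ≤ σ.blk k := by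
      by_contra hc
      push Not at hc
      have := (σ.mem_union_iff r k).mp ⟨_, hc, hm⟩
      omega
    have hM := σ.M_mono hr
    rw [Pi.sub_apply, ind_part_zero σ _ hk, σ.Pavg_apply _ hm, Finset.sum_eq_zero]
    · simp
    · intro i hi
      have := (σ.mem_part_iff _ _).mp hi
      exact ind_part_zero σ _ (by omega)

theorem Y_start (hsemi : b.toBioSystem.SemiNormalized) : ∃ K : ℝ, 0 ≤ K ∧
    ∀ f, FS f → ∀ r, YNorm B b S σ (({k | k < σ.M r} : Set ℕ).indicator f) ≤
      K * YNorm B b S σ f := by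
  obtain ⟨K, hK0, h1, -⟩ := Y_const B b S σ hsemi
  refine ⟨1 + K, by positivity, fun f hf r => ?_⟩
  have hH := h1 f hf r
  have hQ := Q_le_YNorm B b S σ f
  rw [YNorm, Qavg_start, Hmap_eq B b S σ (R := r) (fun k hk => ind_part_zero σ f hk)]
  have h2 := S.nrm_indicator_le (σ.FS_Qavg hf) {k | k < σ.M r}
  have e : (∑ n ∈ Finset.range r,
      vstar S σ n (({k | k < σ.M r} : Set ℕ).indicator f) • b.vec n) =
      ∑ n ∈ Finset.range r, vstar S σ n f • b.vec n := by
    apply Finset.sum_congr rfl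
    intro n hn
    congr 1
    unfold vstar
    rw [Finset.sum_congr rfl (fun i hi => ind_part_eq σ f (Finset.mem_range.mp hn) hi)]
  rw [e]
  linarith

theorem Y_partial (hsemi : b.toBioSystem.SemiNormalized) (hLRP : LRP S.Lam) (hURP : URP S.Lam)
    {c : ℕ} (hc : 1 ≤ c) (hM : ∀ r, σ.M r ≤ c * σ.N r) :
    ∃ K : ℝ, 0 ≤ K ∧ ∀ f, FS f → ∀ m : ℕ,
      YNorm B b S σ (({k | k < m} : Set ℕ).indicator f) ≤ K * YNorm B b S σ f := by
  obtain ⟨K1, hK1, h1⟩ := Y_start B b S σ hsemi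
  obtain ⟨K2, hK2, h2⟩ := Y_E2 B b S σ hsemi hLRP hURP hc hM
  obtain ⟨K3, hK3, -, h3⟩ := Y_const B b S σ hsemi
  have hk := B.kpos
  refine ⟨B.kappa * (K1 + K2 * (1 + K3)), by positivity, fun f hf m => ?_⟩
  set r := σ.blk m with hr
  have hm := (σ.mem_part_iff _ _).mp (σ.blk_mem m)
  rw [← hr] at hm
  set D : Set ℕ := {k | σ.M r ≤ k ∧ k < m} with hD
  have hA : ∀ k ∈ D, k ∈ σ.part r := by
    intro k hk
    rw [hD, Set.mem_ofPred_eq] at hk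
    rw [σ.mem_part_iff]; omega
  have e : ({k | k < m} : Set ℕ).indicator f =
      ({k | k < σ.M r} : Set ℕ).indicator f + D.indicator f := by
    ext k
    simp only [Pi.add_apply, Set.indicator, Set.mem_ofPred_eq, hD]
    by_cases h5 : k < σ.M r
    · rw [if_pos (by omega), if_pos h5, if_neg (by omega), add_zero]
    · by_cases h6 : k < m
      · rw [if_pos h6, if_neg h5, if_pos (by omega), zero_add]
      · rw [if_neg h6, if_neg h5, if_neg (by omega), zero_add]
  have hn : S.nrm (D.indicator f) ≤ S.nrm (σ.Qavg f) + |vstar S σ r f| := by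
    have e2 : D.indicator f = D.indicator (σ.Qavg f) + D.indicator (σ.Pavg f) := by
      rw [← Set.indicator_add']
      congr 1; ext k; exact fsplit σ f k
    rw [e2]
    refine (S.tri ((σ.FS_Qavg hf).indicator D) ((σ.FS_Pavg hf).indicator D)).trans ?_
    refine add_le_add (S.nrm_indicator_le (σ.FS_Qavg hf) D) ?_
    have hL := S.Lam_pos (σ.N_pos r)
    have := S.nrm_le_Lam (σ.part r) (f := D.indicator (σ.Pavg f))
      (t := |vstar S σ r f| / S.Lam (σ.N r)) (by positivity) ?_ ?_
    · refine this.trans ?_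
      change |vstar S σ r f| / S.Lam (σ.N r) * S.Lam (σ.N r) ≤ _
      rw [div_mul_cancel₀ _ hL.ne']
    · intro n hn
      have h7 : |σ.Pavg f n| = |vstar S σ r f| / S.Lam (σ.N r) := by
        rw [← Pavg_vstar S σ f hn, abs_mul, abs_of_pos hL, mul_div_cancel_right₀ _ hL.ne']
      rw [← h7]
      by_cases h8 : n ∈ D <;> simp [h8]
    · intro n hn
      exact Set.indicator_of_notMem (fun h => hn (hA n h)) _
  have h4 := h2 (D.indicator f) (σ.part r) r
    (fun k hk => Set.indicator_of_notMem (fun h => hk (hA k h)) _) le_rfl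
    (fun k hk => Set.indicator_of_notMem (fun h => by
      rw [hD, Set.mem_ofPred_eq] at h; omega) _)
  rw [e]
  refine (YNorm_add B b S σ (hf.indicator _) (hf.indicator _)).trans ?_
  have h5 := h1 f hf r
  have h6 := h3 f hf r
  have h7 := Q_le_YNorm B b S σ f
  rw [mul_assoc]
  apply mul_le_mul_of_nonneg_left _ hk.le
  have : K2 * S.nrm (D.indicator f) ≤ K2 * ((1 + K3) * YNorm B b S σ f) := by
    gcongr; linarith
  linarith

theorem YNorm_zero : YNorm B b S σ 0 = 0 := by
  have := YNorm_smul B b S σ (f := 0) 0 (FS.of_range 0 (by simp))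
  simpa using this

theorem YNorm_neg {f : ℕ → ℝ} (hf : FS f) : YNorm B b S σ (-f) = YNorm B b S σ f := by
  have := YNorm_smul B b S σ (-1) hf
  simpa using this

theorem Y_add3 {f g h : ℕ → ℝ} (hf : FS f) (hg : FS g) (hh : FS h) :
    YNorm B b S σ (f - g + h) ≤
      B.kappa * (B.kappa * (YNorm B b S σ f + YNorm B b S σ g) + YNorm B b S σ h) := by
  refine (YNorm_add B b S σ (hf.sub hg) hh).trans ?_
  have hk := B.kpos
  gcongr
  have h1 := YNorm_add B b S σ hf (g := -g) (hg.of_imp (fun n h => by simp [h]))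
  rw [YNorm_neg B b S σ hg] at h1
  rwa [sub_eq_add_neg]

theorem Y_qg (hsemi : b.toBioSystem.SemiNormalized) (hLRP : LRP S.Lam) (hURP : URP S.Lam)
    {c : ℕ} (hc : 1 ≤ c) (hM : ∀ r, σ.M r ≤ c * σ.N r) :
    ∃ K : ℝ, 0 ≤ K ∧ ∀ f, FS f → ∀ A : Finset ℕ, (∀ j ∈ A, ∀ k, k ∉ A → |f k| ≤ |f j|) →
      YNorm B b S σ ((A : Set ℕ).indicator f) ≤ K * YNorm B b S σ f := by
  obtain ⟨K1, hK1, h1⟩ := Y_start B b S σ hsemi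
  obtain ⟨K2, hK2, h2⟩ := Y_E2 B b S σ hsemi hLRP hURP hc hM
  obtain ⟨K3, hK3, -, h3⟩ := Y_const B b S σ hsemi
  obtain ⟨K4, hK4, h4⟩ := Y_E1 B b S σ hsemi hLRP hURP hc hM
  obtain ⟨K5, hK5, h5⟩ := Y_low B b S σ hsemi hM
  have hk := B.kpos
  set K6 := K3 + K5 with hK6
  refine ⟨1 + B.kappa * (B.kappa * (K1 + K4 * (2 * K6)) + K2 * 2), by positivity,
    fun f hf A hA => ?_⟩
  have hY := YNorm_nonneg B b S σ f
  set Y := YNorm B b S σ f with hYdef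
  have hbig : 0 ≤ B.kappa * (B.kappa * (K1 + K4 * (2 * K6)) + K2 * 2) := by positivity
  rcases A.eq_empty_or_nonempty with rfl | hne
  · have : ((∅ : Finset ℕ) : Set ℕ).indicator f = 0 := by simp; rfl
    rw [this, YNorm_zero]; positivity
  obtain ⟨j0, hj0, hmin⟩ := A.exists_min_image (fun k => |f k|) hne
  set t := |f j0| with ht
  have ht0 : 0 ≤ t := abs_nonneg _
  rcases ht0.eq_or_lt with h0 | htp
  · have : (A : Set ℕ).indicator f = f := by
      ext k
      by_cases hkA : k ∈ A
      · simp [hkA]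
      · have := hA j0 hj0 k hkA
        rw [← ht, ← h0] at this
        have : f k = 0 := by simpa using this
        simp [this]
    rw [this]
    nlinarith
  obtain ⟨r, hr1, hr2⟩ := exists_cut (fun n => 2 * K6 * Y / t < S.Lam (σ.N n))
    (Lam_unbdd S σ hLRP hc hM _)
  set I : Set ℕ := {k | k < σ.M r} with hI
  set g : ℕ → ℝ := (A : Set ℕ)ᶜ.indicator f with hg
  set h : ℕ → ℝ := (Iᶜ ∩ (A : Set ℕ)).indicator f with hh
  have e : (A : Set ℕ).indicator f = I.indicator f - I.indicator g + h := by
    ext k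
    by_cases a : k ∈ A <;> by_cases i : k ∈ I <;> simp [hg, hh, Set.indicator, a, i]
  have hgFS : FS g := hf.indicator _
  have hgt : ∀ k, |g k| ≤ t := by
    intro k
    by_cases a : k ∈ A
    · simpa [hg, a] using ht0
    · simpa [hg, a] using hA j0 hj0 k a
  have b1 := h1 f hf r
  have b2 : YNorm B b S σ (I.indicator g) ≤ K4 * (2 * K6 * Y) := by
    rcases hr2 with h0 | ⟨r', hr', hnp⟩
    · have : I.indicator g = 0 := by
        have hIe : I = ∅ := by
          ext k; simp [hI, h0, OrderedPartition.M]
        rw [hIe]; simp; rfl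
      rw [this, YNorm_zero]; positivity
    · have := h4 (I.indicator g) t r' ht0 (fun k => by
        by_cases i : k ∈ I
        · simpa [i] using hgt k
        · simpa [i] using ht0) (fun k hk => by
        rw [hI, hr']; exact ind_part_zero σ g hk)
      refine this.trans ?_
      push Not at hnp
      rw [le_div_iff₀ htp, mul_comm] at hnp
      exact mul_le_mul_of_nonneg_left hnp hK4
  have b3 : YNorm B b S σ h ≤ K2 * (2 * Y) := by
    have hcard : A.card ≤ σ.N r := by
      by_contra hcon
      push Not at hcon
      have q1 := h5 f hf t A ht0 hmin
      have q2 := hr1 r le_rfl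
      have q3 := S.Lam_mono hcon.le
      rw [div_lt_iff₀ htp] at q2
      have q4 : t * S.Lam (σ.N r) ≤ t * S.Lam A.card := by gcongr
      have q5 : 0 ≤ K3 * Y := by positivity
      have q6 : 0 ≤ K5 * Y := by positivity
      rw [hK6] at q2
      rw [← hYdef] at q1
      nlinarith
    have q := h2 h A r (fun k hk => by simp [hh, Set.indicator, hk]) hcard
      (fun k hk => by
        have : k ∈ I := hk
        simp [hh, Set.indicator, this])
    refine q.trans ?_
    gcongr
    have hq2 : S.nrm ((2 : ℝ) • σ.Qavg f) = 2 * S.nrm (σ.Qavg f) := by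
      rw [S.nrm_smul]; norm_num
    have hqY := Q_le_YNorm B b S σ f
    refine le_trans (S.nrm_mono ((σ.FS_Qavg hf).smul 2) ?_) (hq2.le.trans (by linarith))
    intro k
    by_cases hkm : k ∈ Iᶜ ∩ (A : Set ℕ)
    · rw [hh, Set.indicator_of_mem hkm, Pi.smul_apply, smul_eq_mul, abs_mul, abs_two]
      obtain ⟨hk1, hk2⟩ := hkm
      have hk1' : σ.M r ≤ k := by simpa [hI] using hk1
      have hm := σ.blk_mem k
      have hrn : r ≤ σ.blk k := by
        by_contra hc'
        push Not at hc'
        have := (σ.mem_union_iff r k).mp ⟨_, hc', hm⟩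
        omega
      have q2 := hr1 _ hrn
      have hL := S.Lam_pos (σ.N_pos (σ.blk k))
      have q3 := h3 f hf (σ.blk k)
      rw [← Pavg_vstar S σ f hm, abs_mul, abs_of_pos hL, ← hYdef] at q3
      rw [div_lt_iff₀ htp] at q2
      have q4 : |σ.Pavg f k| ≤ t / 2 := by
        have q5 : 0 ≤ K5 * Y := by positivity
        by_contra hcon
        push Not at hcon
        have := mul_lt_mul_of_pos_right hcon hL
        rw [hK6] at q2
        nlinarith
      have q6 := hmin k hk2
      have q7 := abs_add_le (σ.Qavg f k) (σ.Pavg f k)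
      rw [← fsplit σ f k] at q7
      linarith
    · rw [hh, Set.indicator_of_notMem hkm]; simp
  rw [e]
  refine (Y_add3 B b S σ (hf.indicator _) (hgFS.indicator _) (hf.indicator _)).trans ?_
  have b4 : B.kappa * (B.kappa * (YNorm B b S σ (I.indicator f) + YNorm B b S σ (I.indicator g))
      + YNorm B b S σ h) ≤
      B.kappa * (B.kappa * (K1 * Y + K4 * (2 * K6 * Y)) + K2 * (2 * Y)) := by
    gcongr
  refine b4.trans ?_
  nlinarith

theorem Y_up (hsemi : b.toBioSystem.SemiNormalized) (hLRP : LRP S.Lam) (hURP : URP S.Lam)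
    {c : ℕ} (hc : 1 ≤ c) (hM : ∀ r, σ.M r ≤ c * σ.N r) :
    ∃ K : ℝ, 0 ≤ K ∧ ∀ (u : ℕ → ℝ) (A : Finset ℕ) (m : ℕ), (∀ k, |u k| ≤ 1) →
      (∀ k, k ∉ A → u k = 0) → A.card ≤ m → YNorm B b S σ u ≤ K * S.Lam m := by
  obtain ⟨K2, hK2, h2⟩ := Y_E2 B b S σ hsemi hLRP hURP hc hM
  obtain ⟨K4, hK4, h4⟩ := Y_E1 B b S σ hsemi hLRP hURP hc hM
  have hk := B.kpos
  refine ⟨B.kappa * (K4 + K2), by positivity, fun u A m hu hA hm => ?_⟩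
  have hL := S.Lam_nonneg m
  have hev : ∃ r, ∀ n, r ≤ n → m ≤ σ.N n := by
    obtain ⟨s, -, hs⟩ := grow σ hc hM m
    refine ⟨s, fun n hn => ?_⟩
    have := hs 0 n (by omega)
    have h0 := σ.N_pos 0
    nlinarith
  obtain ⟨r, hr1, hr2⟩ := exists_cut (fun n => m ≤ σ.N n) hev
  have huFS : FS u := FS.of_finset A hA
  set I : Set ℕ := {k | k < σ.M r} with hI
  have e : u = I.indicator u + Iᶜ.indicator u := (Set.indicator_self_add_compl I u).symm
  have b2 : YNorm B b S σ (I.indicator u) ≤ K4 * S.Lam m := by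
    rcases hr2 with h0 | ⟨r', hr', hnp⟩
    · have : I.indicator u = 0 := by
        have hIe : I = ∅ := by
          ext k; simp [hI, h0, OrderedPartition.M]
        rw [hIe]; simp; rfl
      rw [this, YNorm_zero]; positivity
    · have := h4 (I.indicator u) 1 r' zero_le_one (fun k => by
        by_cases i : k ∈ I
        · simpa [i] using hu k
        · simp [i]) (fun k hk => by
        rw [hI, hr']; exact ind_part_zero σ u hk)
      refine this.trans ?_
      rw [one_mul]
      gcongr
      exact S.Lam_mono (by omega)
  have b3 : YNorm B b S σ (Iᶜ.indicator u) ≤ K2 * S.Lam m := by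
    have hz : ∀ k, k ∉ A → Iᶜ.indicator u k = 0 := fun k hk => by
      simp [Set.indicator, hA k hk]
    have q := h2 (Iᶜ.indicator u) A r hz (hm.trans (hr1 r le_rfl))
      (fun k hk => by
        have : k ∈ I := hk
        simp [Set.indicator, this])
    refine q.trans ?_
    gcongr
    have := S.nrm_le_Lam A (f := Iᶜ.indicator u) (t := 1) zero_le_one (fun k _ => by
      by_cases i : k ∈ I
      · simp [i]
      · simpa [i] using hu k) hz
    rw [one_mul] at this
    exact this.trans (S.Lam_mono hm)
  rw [e]
  refine (YNorm_add B b S σ (huFS.indicator _) (huFS.indicator _)).trans ?_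
  rw [mul_assoc, add_mul]
  gcongr

end Y2

/-- The finitely supported sequence with prescribed values on `A`. -/
def mk (A : Finset ℕ) (a : ℕ → ℝ) : ℕ →₀ ℝ := ∑ n ∈ A, Finsupp.single n (a n)

theorem mk_apply (A : Finset ℕ) (a : ℕ → ℝ) (k : ℕ) : mk A a k = if k ∈ A then a k else 0 := by
  unfold mk
  rw [Finsupp.finsetSum_apply]
  simp [Finsupp.single_apply]

theorem mk_coe (A : Finset ℕ) (a : ℕ → ℝ) : ⇑(mk A a) = (A : Set ℕ).indicator a := by
  ext k
  rw [mk_apply]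
  simp [Set.indicator]

theorem mk_self (f : ℕ →₀ ℝ) : ∃ m₀, ∀ m, m₀ ≤ m → mk (Finset.range m) f = f := by
  obtain ⟨R, hR⟩ := f.support.bddAbove
  refine ⟨R + 1, fun m hm => ?_⟩
  ext k
  rw [mk_apply]
  split_ifs with h
  · rfl
  · by_contra hc
    have := hR (Finsupp.mem_support_iff.mpr (Ne.symm hc))
    simp at h
    omega

theorem le_of_eps {a b D : ℝ} (hD : 0 ≤ D) (h : ∀ ε : ℝ, 0 < ε → a ≤ b + D * ε) : a ≤ b := by
  apply le_of_forall_pos_le_add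
  intro ε hε
  have := h (ε / (D + 1)) (by positivity)
  have h2 : D * (ε / (D + 1)) ≤ ε := by
    rw [mul_div_assoc', div_le_iff₀ (by positivity)]
    nlinarith
  linarith

theorem eq_of_eps {a b D : ℝ} (hD : 0 ≤ D) (h : ∀ ε : ℝ, 0 < ε → |a - b| ≤ D * ε) : a = b := by
  have : |a - b| ≤ 0 := le_of_eps hD (fun ε hε => by rw [zero_add]; exact h ε hε)
  have h2 := abs_nonpos_iff.mp this
  linarith

section Abs
variable {Y : Type*} [AddCommGroup Y] [Module ℝ Y] (BY : QuasiBanach Y)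
    (j : (ℕ →₀ ℝ) →ₗ[ℝ] Y)

theorem j_mk (A : Finset ℕ) (a : ℕ → ℝ) :
    ∑ n ∈ A, a n • j (Finsupp.single n 1) = j (mk A a) := by
  unfold mk
  rw [map_sum]
  apply Finset.sum_congr rfl
  intro n _
  rw [← map_smul]
  simp

theorem coord_ex (hdense : ∀ y : Y, ∀ ε : ℝ, 0 < ε → ∃ f : ℕ →₀ ℝ, BY.q (y - j f) < ε)
    {C : ℝ} (hC : 0 ≤ C) (hcb : ∀ (f : ℕ →₀ ℝ) n, |f n| ≤ C * BY.q (j f)) (n : ℕ) (y : Y) :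
    ∃ a : ℝ, ∀ f : ℕ →₀ ℝ, |a - f n| ≤ C * BY.kappa * BY.q (y - j f) := by
  have key : ∀ f g : ℕ →₀ ℝ, f n - C * BY.kappa * BY.q (y - j f) ≤
      g n + C * BY.kappa * BY.q (y - j g) := by
    intro f g
    have h1 := hcb (f - g) n
    have h2 := BY.q_tri3 (j f) y (j g)
    rw [map_sub, Finsupp.sub_apply] at h1
    rw [BY.q_sub_comm (j f) y] at h2
    have h3 := mul_le_mul_of_nonneg_left h2 hC
    have h4 := le_abs_self (f n - g n)
    nlinarith
  have hb : BddAbove (Set.range fun f : ℕ →₀ ℝ => f n - C * BY.kappa * BY.q (y - j f)) := by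
    refine ⟨(0 : ℕ →₀ ℝ) n + C * BY.kappa * BY.q (y - j 0), ?_⟩
    rintro _ ⟨f, rfl⟩
    exact key f 0
  refine ⟨⨆ f : ℕ →₀ ℝ, (f n - C * BY.kappa * BY.q (y - j f)), fun f => ?_⟩
  have h1 := le_ciSup hb f
  have h2 : (⨆ f : ℕ →₀ ℝ, (f n - C * BY.kappa * BY.q (y - j f))) ≤
      f n + C * BY.kappa * BY.q (y - j f) := ciSup_le fun g => key g f
  rw [abs_le]
  constructor <;> linarith

theorem abs_basis (hdense : ∀ y : Y, ∀ ε : ℝ, 0 < ε → ∃ f : ℕ →₀ ℝ, BY.q (y - j f) < ε)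
    {C K : ℝ} (hC : 0 ≤ C) (hcb : ∀ (f : ℕ →₀ ℝ) n, |f n| ≤ C * BY.q (j f))
    (hK : 0 ≤ K) (hpb : ∀ (f : ℕ →₀ ℝ) m, BY.q (j (mk (Finset.range m) f)) ≤ K * BY.q (j f)) :
    ∃ bY : QBasis BY, (∀ n : ℕ, bY.vec n = j (Finsupp.single n 1)) ∧
      ∃ K' : ℝ, 0 ≤ K' ∧ ∀ y m,
        BY.q (∑ n ∈ Finset.range m, bY.coord n y • bY.vec n) ≤ K' * BY.q y := by
  have hk := BY.kpos
  choose co hco using coord_ex BY j hdense hC hcb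
  set C' := C * BY.kappa with hC'
  have hC'0 : 0 ≤ C' := by positivity
  have coj : ∀ n f, co n (j f) = f n := by
    intro n f
    have := hco n (j f) f
    rw [sub_self, BY.q_zero, mul_zero] at this
    have := abs_nonpos_iff.mp this
    linarith
  have coadd : ∀ n y z, co n (y + z) = co n y + co n z := by
    intro n y z
    apply eq_of_eps (D := C' * (2 * BY.kappa + 2)) (by positivity)
    intro ε hε
    obtain ⟨f, hf⟩ := hdense y ε hε
    obtain ⟨g, hg⟩ := hdense z ε hε
    have h1 := hco n (y + z) (f + g)
    have h2 := hco n y f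
    have h3 := hco n z g
    have h4 : BY.q (y + z - j (f + g)) ≤ BY.kappa * (2 * ε) := by
      have : y + z - j (f + g) = (y - j f) + (z - j g) := by rw [map_add]; abel
      rw [this]
      refine (BY.q_triangle _ _).trans ?_
      gcongr; linarith
    have h5 := h1.trans (mul_le_mul_of_nonneg_left h4 hC'0)
    have h6 := h2.trans (mul_le_mul_of_nonneg_left hf.le hC'0)
    have h7 := h3.trans (mul_le_mul_of_nonneg_left hg.le hC'0)
    rw [Finsupp.add_apply] at h5
    rw [abs_le] at h5 h6 h7 ⊢
    constructor <;> linarith [h5.1, h5.2, h6.1, h6.2, h7.1, h7.2]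
  have cosmul : ∀ n (a : ℝ) y, co n (a • y) = a * co n y := by
    intro n a y
    apply eq_of_eps (D := 2 * (|a| * C')) (by positivity)
    intro ε hε
    obtain ⟨f, hf⟩ := hdense y ε hε
    have h1 := hco n (a • y) (a • f)
    have h2 := hco n y f
    rw [map_smul, ← smul_sub, BY.q_smul, Finsupp.smul_apply, smul_eq_mul] at h1
    have h3 : |a * (co n y - f n)| ≤ |a| * (C' * ε) := by
      rw [abs_mul]
      exact mul_le_mul_of_nonneg_left (h2.trans (mul_le_mul_of_nonneg_left hf.le hC'0))
        (abs_nonneg a)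
    have h4 : C' * (|a| * BY.q (y - j f)) ≤ C' * (|a| * ε) := by gcongr
    have h5 := h1.trans h4
    rw [abs_le] at h5 h3 ⊢
    constructor <;> linarith [h5.1, h5.2, h3.1, h3.2]
  have cosub : ∀ n y z, co n (y - z) = co n y - co n z := by
    intro n y z
    have := coadd n (y - z) z
    rw [sub_add_cancel] at this
    linarith
  have SJ : ∀ f m, ∑ n ∈ Finset.range m, co n (j f) • j (Finsupp.single n 1) =
      j (mk (Finset.range m) f) := by
    intro f m
    rw [← j_mk]
    exact Finset.sum_congr rfl (fun n _ => by rw [coj])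
  have Ssub : ∀ y z m, ∑ n ∈ Finset.range m, co n (y - z) • j (Finsupp.single n 1) =
      ∑ n ∈ Finset.range m, co n y • j (Finsupp.single n 1) -
      ∑ n ∈ Finset.range m, co n z • j (Finsupp.single n 1) := by
    intro y z m
    rw [← Finset.sum_sub_distrib]
    exact Finset.sum_congr rfl (fun n _ => by rw [cosub, sub_smul])
  have cobd : ∀ n y, |co n y| ≤ C' * BY.q y := by
    intro n y
    have := hco n y 0
    simpa using this
  have Sbd : ∀ y m, BY.q (∑ n ∈ Finset.range m, co n y • j (Finsupp.single n 1)) ≤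
      BY.kappa * (K * BY.kappa) * BY.q y := by
    intro y m
    set V := ∑ n ∈ Finset.range m, BY.q (j (Finsupp.single n 1)) with hV
    have hV0 : 0 ≤ V := Finset.sum_nonneg fun n _ => BY.q_nonneg _
    apply le_of_eps (D := BY.kappa * (m * BY.kappa ^ m * (C' * V) + K * BY.kappa))
      (by positivity)
    intro ε hε
    obtain ⟨f, hf⟩ := hdense y ε hε
    have h1 : BY.q (∑ n ∈ Finset.range m, co n (y - j f) • j (Finsupp.single n 1)) ≤
        m * BY.kappa ^ m * (C' * V * ε) := by
      apply BY.q_sum_le m _ _ (by positivity)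
      intro n hn
      rw [BY.q_smul]
      have a1 := (cobd n (y - j f)).trans (mul_le_mul_of_nonneg_left hf.le hC'0)
      have a2 : BY.q (j (Finsupp.single n 1)) ≤ V :=
        Finset.single_le_sum (f := fun n => BY.q (j (Finsupp.single n 1)))
          (fun n _ => BY.q_nonneg _) (Finset.mem_range.mpr hn)
      have := mul_le_mul a1 a2 (BY.q_nonneg _) (by positivity)
      linarith
    have h2 := hpb f m
    have h3 : BY.q (j f) ≤ BY.kappa * (BY.q y + ε) := by
      have : j f = (j f - y) + y := by abel
      rw [this]
      refine (BY.q_triangle _ _).trans ?_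
      rw [BY.q_sub_comm]
      exact mul_le_mul_of_nonneg_left (by linarith) hk.le
    have h4 := Ssub y (j f) m
    rw [SJ] at h4
    have h5 : ∑ n ∈ Finset.range m, co n y • j (Finsupp.single n 1) =
        ∑ n ∈ Finset.range m, co n (y - j f) • j (Finsupp.single n 1) +
          j (mk (Finset.range m) f) := by rw [h4]; abel
    rw [h5]
    refine (BY.q_triangle _ _).trans ?_
    have h6 := h2.trans (mul_le_mul_of_nonneg_left h3 hK)
    have h7 := mul_le_mul_of_nonneg_left (add_le_add h1 h6) hk.le
    refine h7.trans (le_of_eq ?_)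
    ring
  refine ⟨{ vec := fun n => j (Finsupp.single n 1)
            vec_mem := fun _ => trivial
            coord := co
            coord_add := fun n f g _ _ => coadd n f g
            coord_smul := fun n a f _ => cosmul n a f
            coord_bdd := fun n => ⟨C', fun f _ => cobd n f⟩
            biorth := ?_
            expansion := ?_ }, fun n => rfl, BY.kappa * (K * BY.kappa), by positivity, Sbd⟩
  · intro m n
    rw [coj, Finsupp.single_apply]
    simp only [eq_comm]
  · intro y _ ε hε
    set K' := BY.kappa * (K * BY.kappa) with hK'
    have hK'0 : 0 ≤ K' := by positivity
    obtain ⟨f, hf⟩ := hdense y (ε / (BY.kappa * (K' + 1))) (by positivity)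
    obtain ⟨m₀, hm₀⟩ := mk_self f
    refine ⟨m₀, fun m hm => ?_⟩
    have h4 := Ssub y (j f) m
    rw [SJ, hm₀ m hm] at h4
    have h5 : ∑ n ∈ Finset.range m, co n y • j (Finsupp.single n 1) - y =
        ∑ n ∈ Finset.range m, co n (y - j f) • j (Finsupp.single n 1) + (j f - y) := by
      rw [h4]; abel
    change BY.q (∑ n ∈ Finset.range m, co n y • j (Finsupp.single n 1) - y) < ε
    rw [h5]
    refine (BY.q_triangle _ _).trans_lt ?_
    rw [BY.q_sub_comm (j f) y]
    have h6 := Sbd (y - j f) m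
    rw [lt_div_iff₀ (by positivity)] at hf
    have h7 : BY.kappa * (BY.q (∑ n ∈ Finset.range m, co n (y - j f) • j (Finsupp.single n 1)) +
      BY.q (y - j f)) ≤ BY.kappa * (K' * BY.q (y - j f) + BY.q (y - j f)) := by gcongr
    refine h7.trans_lt (lt_of_eq_of_lt ?_ hf)
    ring

end Abs

theorem statement3 {X : Type*} [AddCommGroup X] [Module ℝ X] (B : QuasiBanach X)
    (bX : QBasis B) (hsemi : bX.toBioSystem.SemiNormalized)
    (S : SubsymmetricSpace) (σ : OrderedPartition)
    (hLRP : LRP S.Lam) (hURP : URP S.Lam)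
    (hMN : ∃ c : ℝ, ∀ r : ℕ, (σ.M r : ℝ) ≤ c * (σ.N r : ℝ))
    {Y : Type*} [AddCommGroup Y] [Module ℝ Y] (BY : QuasiBanach Y)
    (j : (ℕ →₀ ℝ) →ₗ[ℝ] Y)
    (hiso : ∀ f : ℕ →₀ ℝ, BY.q (j f) = YNorm B bX S σ ⇑f)
    (hdense : ∀ y : Y, ∀ ε : ℝ, 0 < ε → ∃ f : ℕ →₀ ℝ, BY.q (y - j f) < ε) :
    ∃ bY : QBasis BY, (∀ n : ℕ, bY.vec n = j (Finsupp.single n 1)) ∧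
      bY.toBioSystem.AlmostGreedy ∧
      ∃ c C : ℝ, 0 < c ∧ ∀ m : ℕ, 1 ≤ m →
        c * S.Lam m ≤ bY.toBioSystem.fundFun m ∧
        bY.toBioSystem.fundFun m ≤ C * S.Lam m := by
  obtain ⟨c, hc, hM⟩ := growN σ hMN
  have FSf : ∀ f : ℕ →₀ ℝ, FS ⇑f := fun f => FS.of_finset f.support (by simp)
  obtain ⟨K1, hK1, hlow⟩ := Y_low B bX S σ hsemi hM
  obtain ⟨K2, hK2, hpart⟩ := Y_partial B bX S σ hsemi hLRP hURP hc hM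
  obtain ⟨K3, hK3, hqg⟩ := Y_qg B bX S σ hsemi hLRP hURP hc hM
  obtain ⟨K4, hK4, hup⟩ := Y_up B bX S σ hsemi hLRP hURP hc hM
  have hL1 := S.Lam_pos (le_refl 1)
  obtain ⟨bY, hvec, K5, hK5, hS⟩ := abs_basis BY j hdense (C := K1 / S.Lam 1) (K := K2)
    (by positivity) (fun f n => by
      have := hlow f (FSf f) |f n| {n} (abs_nonneg _) (by simp)
      rw [Finset.card_singleton, ← hiso] at this
      rw [div_mul_eq_mul_div, le_div_iff₀ hL1]
      exact this) hK2 (fun f m => by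
      rw [hiso, hiso, mk_coe]
      have := hpart f (FSf f) m
      have e : ((Finset.range m : Finset ℕ) : Set ℕ) = {k | k < m} := by
        ext k; simp
      rw [e]; exact this)
  have hveq : ∀ (A : Finset ℕ) (a : ℕ → ℝ), ∑ n ∈ A, a n • bY.vec n = j (mk A a) := by
    intro A a
    rw [← j_mk]
    exact Finset.sum_congr rfl (fun n _ => by rw [hvec])
  have hsum1 : ∀ A : Finset ℕ, ∑ n ∈ A, bY.vec n = j (mk A 1) := by
    intro A
    rw [← hveq]
    simp
  have upper : ∀ (A : Finset ℕ) (ε : ℕ → ℝ) (m : ℕ), (∀ n ∈ A, |ε n| = 1) → A.card ≤ m →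
      BY.q (j (mk A ε)) ≤ K4 * S.Lam m := by
    intro A ε m hε hA
    rw [hiso]
    refine hup _ A m (fun k => ?_) (fun k hk => ?_) hA
    · rw [mk_apply]
      split_ifs with h
      · exact (hε k h).le
      · simp
    · rw [mk_apply, if_neg hk]
  have lower : ∀ A : Finset ℕ, S.Lam A.card ≤ K1 * BY.q (j (mk A 1)) := by
    intro A
    rw [hiso]
    have := hlow (mk A 1) (FSf _) 1 A zero_le_one (fun k hk => by
      rw [mk_apply, if_pos hk]; simp)
    linarith
  have hK1p : 0 < K1 := by
    have := lower {0}
    rw [Finset.card_singleton] at this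
    by_contra hcon
    have h0 : K1 = 0 := le_antisymm (not_lt.mp hcon) hK1
    rw [h0, zero_mul] at this
    linarith
  refine ⟨bY, hvec, ⟨?_, ?_⟩, ?_⟩
  · refine ⟨K3 * K5, fun y _ A hA => ?_⟩
    obtain ⟨m, hm⟩ := A.bddAbove
    set F := mk (Finset.range (m + 1)) (fun n => bY.coord n y) with hF
    have hAr : ∀ k ∈ A, k ∈ Finset.range (m + 1) := by
      intro k hk
      have := hm hk
      rw [Finset.mem_range]; omega
    have hFA : ∀ k ∈ A, F k = bY.coord k y := by
      intro k hk
      rw [hF, mk_apply, if_pos (hAr k hk)]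
    have e : bY.toBioSystem.proj A y = j (mk A F) := by
      rw [← hveq]
      exact Finset.sum_congr rfl (fun n hn => by rw [hFA n hn])
    rw [e, hiso, mk_coe]
    have h1 := hqg F (FSf F) A (fun i hi k hk => by
      have := hA i hi k hk
      rw [hFA i hi]
      refine le_trans ?_ this
      rw [hF, mk_apply]
      split_ifs
      · exact le_rfl
      · simp)
    have h2 := hS y (m + 1)
    rw [hveq, hiso] at h2
    refine h1.trans ?_
    rw [mul_assoc]
    exact mul_le_mul_of_nonneg_left h2 hK3
  · refine ⟨K4 * K1, fun A D hAD => ?_⟩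
    rw [hsum1, hsum1]
    refine (upper A 1 D.card (by simp) hAD).trans ?_
    rw [mul_assoc]
    exact mul_le_mul_of_nonneg_left (lower D) hK4
  · refine ⟨1 / K1, K4, by positivity, fun m _ => ?_⟩
    have hub : ∀ t ∈ {t : ℝ | ∃ (A : Finset ℕ) (ε : ℕ → ℝ), A.card ≤ m ∧ (∀ n ∈ A, |ε n| = 1) ∧
        t = BY.q (∑ n ∈ A, ε n • bY.vec n)}, t ≤ K4 * S.Lam m := by
      rintro t ⟨A, ε, hA, hε, rfl⟩
      rw [hveq]
      exact upper A ε m hε hA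
    have hmem : BY.q (j (mk (Finset.range m) 1)) ∈ {t : ℝ | ∃ (A : Finset ℕ) (ε : ℕ → ℝ),
        A.card ≤ m ∧ (∀ n ∈ A, |ε n| = 1) ∧ t = BY.q (∑ n ∈ A, ε n • bY.vec n)} :=
      ⟨Finset.range m, 1, by simp, by simp, by rw [hveq]⟩
    constructor
    · refine le_trans ?_ (le_csSup ⟨_, hub⟩ hmem)
      have := lower (Finset.range m)
      rw [Finset.card_range] at this
      rw [div_mul_eq_mul_div, one_mul, div_le_iff₀ hK1p, mul_comm]
      exact this
    · exact csSup_le ⟨_, hmem⟩ hub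
end AGpaper
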